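/- Let G be a traceable simple graph on at most 17 vertices in which every vertex has degree 2 or 3. Suppose G has at least 2 vertices of degree 2, and for every cut vertex v of G, each connected component of G − v contains a vertex that has degree 2 in G. Then G has a hamiltonian path starting at a vertex of degree 2. -/

import Mathlib

open SimpleGraph

/-- A graph is traceable if it has a hamiltonian path. -/
def IsTraceable {V : Type} (G : SimpleGraph V) : Prop :=
  ∃ (u v : V) (p : G.Walk u v), p.IsPath ∧ ∀ x : V, x ∈ p.support

/-!
In a counterexample no hamiltonian path starts at a vertex of degree two, and by the handshake lemma
there are more than `1 + n % 2` such vertices. Among the hamiltonian paths `f 0, …, f (n - 1)` and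
the neighbours `f J` of their first vertices, choose one where `J = n - 1 - R` is as large as
possible. Then no hamiltonian path has an edge from its first vertex to one of its last `R`
vertices. If `R ≤ 1`, then all vertices except possibly one form a cycle: for `R = 0` a path can
start anywhere, and for `R = 1` the last vertex and its three neighbours on the cycle form a tripod.

Otherwise choose the path, keeping `J`, such that the first neighbour `f K` of the last vertex comes
as early as possible. The case `K = J` would give `f J` degree four. If `K < J`, the chords at the
two ends overlap. If `J < K`, the last `n - K` vertices form a cycle, which together with the edge
from `f K` to `f (K - 1)` is a lollipop. By minimality of `K`, no hamiltonian path of the lollipop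
starts at a vertex of the cycle which has degree two in the graph or a neighbour outside the cycle.
There is such a vertex besides `f K`, because otherwise `f K` would be a cut vertex violating the
hypothesis. Since such lollipops do not exist for `n - K ≤ 8`, the inequalities `R ≤ K` and
`n ≤ 17` give a contradiction.

That tripods, overlapping chords, and lollipops with at most eight vertices on the cycle do not
occur is shown by a search, which the kernel evaluates. It starts from the known edges. From
hamiltonian paths consisting of known edges it deduces which vertices do not have degree two and
which pairs are not adjacent, and it branches on the third neighbour of a vertex of degree three.
-/

namespace HamSearch

/-- `f 0, …, f (n - 1)` is a path in `G` with vertex set `s`. A hamiltonian path is the case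
`s = Set.univ`, and `s = Set.Iio n` for a graph on `{0, …, n - 1}`. -/
structure IsPathOn {V : Type*} (G : SimpleGraph V) (s : Set V) (n : ℕ) (f : ℕ → V) : Prop where
  bijOn : Set.BijOn f (Set.Iio n) s
  adj : ∀ i, i + 1 < n → G.Adj (f i) (f (i + 1))

section IsPathOn

variable {V : Type*} {G : SimpleGraph V} {s : Set V} {n m : ℕ} {f : ℕ → V}

theorem IsPathOn.comp {A : SimpleGraph ℕ} {g : ℕ → ℕ} (hg : IsPathOn A (Set.Iio n) n g)
    (hbij : Set.BijOn f (Set.Iio n) s) (hadj : ∀ i j, A.Adj i j → G.Adj (f i) (f j)) :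
    IsPathOn G s n fun i => f (g i) :=
  ⟨hbij.comp hg.bijOn, fun i hi => hadj _ _ (hg.adj i hi)⟩

theorem bijOn_Iio_of_mapsTo_of_injOn {g : ℕ → ℕ} (hmaps : ∀ i < n, g i < n)
    (hinj : ∀ i < n, ∀ j < n, g i = g j → i = j) : Set.BijOn g (Set.Iio n) (Set.Iio n) :=
  ((Set.finite_Iio n).injOn_iff_bijOn_of_mapsTo hmaps).1 fun i hi j hj => hinj i hi j hj

theorem IsPathOn.reindex (h : IsPathOn G s n f) {σ : ℕ → ℕ} (hmaps : ∀ i < n, σ i < n)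
    (hinj : ∀ i < n, ∀ j < n, σ i = σ j → i = j)
    (hadj : ∀ i, i + 1 < n → G.Adj (f (σ i)) (f (σ (i + 1)))) :
    IsPathOn G s n fun i => f (σ i) :=
  ⟨h.bijOn.comp (bijOn_Iio_of_mapsTo_of_injOn hmaps hinj), hadj⟩

theorem IsPathOn.inj (h : IsPathOn G s n f) {i j : ℕ} (hi : i < n) (hj : j < n)
    (hij : f i = f j) : i = j :=
  h.bijOn.injOn hi hj hij

theorem IsPathOn.exists_eq (h : IsPathOn G Set.univ n f) (v : V) : ∃ i < n, f i = v :=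
  h.bijOn.surjOn (Set.mem_univ v)

theorem adj_pred (hadj : ∀ i, i + 1 < n → G.Adj (f i) (f (i + 1))) {i : ℕ} (h0 : 0 < i)
    (hi : i < n) : G.Adj (f i) (f (i - 1)) := by
  have := hadj (i - 1) (by omega)
  rw [Nat.sub_add_cancel h0] at this
  exact this.symm

theorem IsPathOn.reverse (h : IsPathOn G s n f) : IsPathOn G s n fun i => f (n - 1 - i) := by
  refine h.reindex (σ := fun i => n - 1 - i) (by omega) (by omega) fun i hi => ?_
  rw [show n - 1 - (i + 1) = n - 1 - i - 1 by omega]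
  exact adj_pred h.adj (by omega) (by omega)

/-- Pósa's rotation: an edge from `f 0` to `f m` allows us to reverse the first `m` vertices. -/
theorem IsPathOn.posaRotation (h : IsPathOn G s n f) (hm : m < n) (hadj : G.Adj (f 0) (f m)) :
    IsPathOn G s n fun i => f (if i < m then m - 1 - i else i) := by
  refine h.reindex (σ := fun i => if i < m then m - 1 - i else i)
    (fun i hi => by split_ifs <;> omega) (fun i _ j _ h => by split_ifs at h <;> omega)
    fun i hi => ?_
  rcases lt_trichotomy (i + 1) m with him | rfl | him
  · rw [if_pos (by omega), if_pos him, show m - 1 - (i + 1) = m - 1 - i - 1 by omega]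
    exact adj_pred h.adj (by omega) (by omega)
  · rw [if_pos (by omega), if_neg (by omega), show i + 1 - 1 - i = 0 by omega]
    exact hadj
  · rw [if_neg (by omega), if_neg (by omega)]
    exact h.adj i hi

theorem IsPathOn.cyclicShift (h : IsPathOn G s n f) (hadj : G.Adj (f 0) (f (n - 1)))
    {k : ℕ} (hk : k < n) : IsPathOn G s n fun i => f (if k + i < n then k + i else k + i - n) := by
  refine h.reindex (σ := fun i => if k + i < n then k + i else k + i - n)
    (fun i hi => by split_ifs <;> omega) (fun i hi j hj h => by split_ifs at h <;> omega)
    fun i hi => ?_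
  rcases lt_trichotomy (k + i + 1) n with him | him | him
  · rw [if_pos (by omega), if_pos (by omega)]
    exact h.adj _ him
  · rw [if_pos (by omega), if_neg (by omega), show k + i = n - 1 by omega,
      show k + (i + 1) - n = 0 by omega]
    exact hadj.symm
  · rw [if_neg (by omega), if_neg (by omega), show k + (i + 1) - n = k + i - n + 1 by omega]
    exact h.adj _ (by omega)

theorem IsPathOn.init (h : IsPathOn G s (n + 1) f) : IsPathOn G (s \ {f n}) n f := by
  refine ⟨?_, fun i hi => h.adj i (by omega)⟩
  have hIio : Set.Iio (n + 1) \ {n} = Set.Iio n := by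
    ext i
    simp only [Set.mem_sdiff, Set.mem_Iio, Set.mem_singleton_iff]
    omega
  exact hIio ▸ h.bijOn.sdiff_singleton (a := n) (by simp)

/-- A path through a set can be replaced on its first vertices by another path with the same
last vertex. -/
theorem IsPathOn.replaceHead {A : SimpleGraph ℕ} {σ : ℕ → ℕ} (h : IsPathOn G s n f) (hm : m < n)
    (hσ : IsPathOn A (Set.Iio (m + 1)) (m + 1) σ) (hA : ∀ i j, A.Adj i j → G.Adj (f i) (f j))
    (hσm : σ m = m) : IsPathOn G s n fun i => f (if i ≤ m then σ i else i) := by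
  have hlt : ∀ i ≤ m, σ i < m + 1 := fun i hi => hσ.bijOn.mapsTo (Nat.lt_succ_iff.2 hi)
  refine h.reindex (σ := fun i => if i ≤ m then σ i else i) (fun i hi => ?_)
    (fun i _ j _ hij => ?_) fun i hi => ?_
  · split_ifs with him
    · exact (hlt i him).trans_le hm
    · exact hi
  · split_ifs at hij with him hjm hjm
    · exact hσ.inj (by omega) (by omega) hij
    · have := hlt i him
      omega
    · have := hlt j hjm
      omega
    · exact hij
  · rcases lt_trichotomy i m with him | rfl | him
    · rw [if_pos him.le, if_pos (by omega)]
      exact hA _ _ (hσ.adj i (by omega))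
    · rw [if_pos le_rfl, if_neg (by omega), hσm]
      exact h.adj i hi
    · rw [if_neg (by omega), if_neg (by omega)]
      exact h.adj i hi

theorem IsPathOn.eq_zero_or_eq_of_subsingleton {i : ℕ} (h : IsPathOn G s n f) (hi : i < n)
    (hsub : (G.neighborSet (f i)).Subsingleton) : i = 0 ∨ i = n - 1 := by
  by_contra! hne
  have := h.inj (by omega) (by omega)
    (hsub (h.adj i (by omega)) (adj_pred h.adj (Nat.pos_of_ne_zero hne.1) hi))
  omega

theorem IsPathOn.not_adj_of_subsingleton (h : IsPathOn G s n f) (hn : 3 ≤ n)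
    (hsub : (G.neighborSet (f 0)).Subsingleton) : ¬ G.Adj (f 0) (f (n - 1)) := fun hadj => by
  have := h.inj (by omega) (by omega) (hsub (h.adj 0 (by omega)) hadj)
  omega

theorem IsPathOn.snoc (h : IsPathOn G s (m + 1) f) {w : V} (hw : w ∉ s) (hadj : G.Adj (f m) w) :
    IsPathOn G (insert w s) (m + 2) (Function.update f (m + 1) w) := by
  have heq : ∀ i ≤ m, Function.update f (m + 1) w i = f i := fun i hi =>
    Function.update_of_ne (by omega) _ _
  refine ⟨?_, fun i hi => ?_⟩
  · have hbij := (h.bijOn.congr fun i hi => (heq i (Nat.lt_succ_iff.1 hi)).symm).insert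
      (a := m + 1) (by rwa [Function.update_self])
    rwa [Function.update_self, ← Order.Iio_succ_eq_insert] at hbij
  · obtain rfl | him := eq_or_ne i m
    · rwa [heq i le_rfl, Function.update_self]
    · rw [heq i (by omega), heq (i + 1) (by omega)]
      exact h.adj i (by omega)

end IsPathOn

/-! ### The search -/

-- Sets of vertices are bit masks. The functions of this section are evaluated by the kernel, so
-- they use recursors and the operations `Nat.land`, `Nat.xor`, … for which it has special support.

/-- `if x = 0 then a else f x`, written so that the kernel evaluates `x` only once. -/
noncomputable def elim (x a : ℕ) (f : ℕ → ℕ) : ℕ :=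
  Nat.rec (motive := fun _ => ℕ) a (fun y _ => f (Nat.succ y)) x

/-- The set difference `A \ B`. -/
def diff (A B : ℕ) : ℕ := Nat.xor A (Nat.land A B)

/-- The set `A` without its element `v`; if `v` is not an element, it is inserted. -/
def erase (A v : ℕ) : ℕ := Nat.xor A (Nat.pow 2 v)

/-- The set `A` without its greatest element. -/
def rest (A : ℕ) : ℕ := erase A (Nat.log2 A)

/-- The neighbours of `v` in the set `A`; row `v` of an adjacency matrix `H` starts at bit
`32 * v`. -/
def row (H v A : ℕ) : ℕ := Nat.land (Nat.shiftRight H (Nat.mul 32 v)) A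

/-- The adjacency matrix of the edge `uw`. -/
def edge (u w : ℕ) : ℕ :=
  Nat.lor (Nat.pow 2 (Nat.add (Nat.mul 32 u) w)) (Nat.pow 2 (Nat.add (Nat.mul 32 w) u))

/-- The set `A` without its `t` greatest elements. -/
noncomputable def drop (t : ℕ) : ℕ → ℕ :=
  Nat.rec (motive := fun _ => ℕ → ℕ) (fun A => A) (fun _ ih A => elim A 0 fun A => ih (rest A)) t

/-- A set of ends of paths which start at `v` and go through `k` further vertices of `A`. It
contains all of them if `v` and the vertices of `A` have at most two neighbours in `A`. -/
noncomputable def ends (H k : ℕ) : ℕ → ℕ → ℕ :=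
  Nat.rec (motive := fun _ => ℕ → ℕ → ℕ) (fun v _ => Nat.pow 2 v)
    (fun _ ih v A => elim (row H v A) 0 fun m =>
      Nat.lor (ih (Nat.log2 m) (erase A (Nat.log2 m)))
        (elim (rest m) 0 fun m' => ih (Nat.log2 m') (erase A (Nat.log2 m')))) k

/-- What is known about a vertex `u` during the search is a pair of sets, coded as one number `acc`:
bits below `32` are the vertices which may have degree two, the others are the vertices which may
be a further neighbour of `u`. This function updates `acc` after hamiltonian paths from `u` to the
vertices of `en` with the set `tail` of final vertices were found. The value `0` stands for a
contradiction, `ru` is the set of neighbours of `u`. -/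
noncomputable def record (full t u ru tail en acc : ℕ) : ℕ :=
  elim (Nat.land tail ru)
    (elim (diff acc (Nat.lor (Nat.lor en (Nat.pow 2 u)) (Nat.shiftLeft tail 32))) 0 fun acc' =>
      elim (drop t (Nat.land acc' full)) 0 fun _ => acc')
    fun _ => 0

/-- Continue the search at `w`, leaving `x` behind. If `x` has only one neighbour in `A`, then the
path has to end at `x`. Here `e = 0` means that this has already happened with another vertex. -/
noncomputable def branch (H : ℕ) (ih : ℕ → ℕ → ℕ → ℕ → ℕ) (w x A e acc : ℕ) : ℕ :=
  elim (row H x A) acc fun y => elim (Nat.add (rest y) e) acc fun _ =>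
    ih w (erase A w) (Nat.mul (rest y) e) acc

/-- One step of the search from `v` to its neighbours in `A`. -/
noncomputable def extend (H : ℕ) (ih : ℕ → ℕ → ℕ → ℕ → ℕ) (v A e acc : ℕ) : ℕ :=
  elim (row H v A) acc fun m =>
    elim (rest m) (elim (erase A (Nat.log2 m)) acc fun A => ih (Nat.log2 m) A e acc) fun m' =>
      elim (branch H ih (Nat.log2 m) (Nat.log2 m') A e acc) 0
        (branch H ih (Nat.log2 m') (Nat.log2 m) A e)

/-- The search for hamiltonian paths from `u` which continue at `v` with `k + R` vertices of `A`;
the last `R` of these are treated by `ends`. -/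
noncomputable def dfs (full t R H u ru k : ℕ) : ℕ → ℕ → ℕ → ℕ → ℕ :=
  Nat.rec (motive := fun _ => ℕ → ℕ → ℕ → ℕ → ℕ)
    (fun v A _ acc => elim (ends H R v A) acc fun en => record full t u ru A en acc)
    (fun _ => extend H) k

/-- Whether `f` does not vanish on the set `A`, which has less than `k` elements. -/
noncomputable def all (f : ℕ → ℕ) (k : ℕ) : ℕ → ℕ :=
  Nat.rec (motive := fun _ => ℕ → ℕ) (fun _ => 0)
    (fun _ ih A => elim A 1 fun A => elim (f (Nat.log2 A)) 0 fun _ => ih (rest A)) k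

/-- Find out by `dfs` what is known about the vertex `u`. If it has degree three, branch on its
third neighbour, continuing by `rec`, otherwise return `next`. -/
noncomputable def tryVertex (full n t R : ℕ) (rec : ℕ → ℕ → ℕ → ℕ) (H D U u next : ℕ) : ℕ :=
  elim (Nat.land U (Nat.pow 2 u)) next fun _ =>
  elim (dfs full t R H u (row H u full) (Nat.sub (Nat.sub n 1) R) u (erase full u) 1
    (Nat.lor D (Nat.shiftLeft (diff (erase U u) (row H u full)) 32))) 1 fun acc =>
  elim (Nat.land acc (Nat.pow 2 u))
    (all (fun w => elim (Nat.lor H (edge u w)) 0 fun H' =>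
      elim (diff (Nat.land acc full) (Nat.pow 2 w)) 1 fun D' => rec H' D' (erase (erase U u) w))
      32 (Nat.shiftRight acc 32))
    fun _ => next

/-- Apply `tryVertex` to `k` vertices, starting with those in the middle of the path. -/
noncomputable def tryVertices (full n t R : ℕ) (rec : ℕ → ℕ → ℕ → ℕ) (H D U k : ℕ) : ℕ :=
  Nat.rec (motive := fun _ => ℕ) 0 (fun k next => tryVertex full n t R rec H D U
    (Nat.mod (Nat.add (Nat.sub (Nat.sub n 1) R) (Nat.sub (Nat.sub n 1) k)) n) next) k

/-- The search tree of depth `d`. The known edges are `H`, the vertices which may have degree two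
are `D`, and those which may have an unknown neighbour are `U`. A nonzero value means that every
branch leads to a contradiction. -/
noncomputable def check (full n t R d : ℕ) : ℕ → ℕ → ℕ → ℕ :=
  Nat.rec (motive := fun _ => ℕ → ℕ → ℕ → ℕ) (fun _ _ _ => 0)
    (fun _ ih H D U => elim (drop t D) 1 fun _ => tryVertices full n t R ih H D U n) d

/-- The adjacency matrix of a list of edges. -/
def graph (es : List (ℕ × ℕ)) : ℕ := es.foldr (fun e H => Nat.lor (edge e.1 e.2) H) 0

/-- The set of the elements of a list. -/
def mask (l : List ℕ) : ℕ := l.foldr (fun v A => Nat.lor (Nat.pow 2 v) A) 0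

/-- The edges of the path `0, …, n - 1`. -/
def pathEdges (n : ℕ) : List (ℕ × ℕ) := (List.range (n - 1)).map fun i => (i, i + 1)

/-- The search starting from the path `0, …, n - 1` with the given chords. The vertices of `sat`
have no further neighbours, and the vertices of `sat` and `low` do not have degree two. -/
noncomputable def run (n t R : ℕ) (chords : List (ℕ × ℕ)) (low sat : List ℕ) : ℕ :=
  elim (2 ^ n - 1) 0 fun full => elim (graph (pathEdges n ++ chords)) 0 fun H =>
    elim (diff full (mask (low ++ sat))) 0 fun D => elim (diff full (mask sat)) 0 fun U =>
      check full n t R 8 H D U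

/-- The search for a cycle `0, …, n - 2` and a further vertex `n - 1` with three neighbours. -/
noncomputable def runTripod (n a b : ℕ) : ℕ :=
  run n (1 + n % 2) 1 [(0, n - 2), (a, n - 1), (a + 1 + b, n - 1)] [0]
    [n - 1, n - 2, a, a + 1 + b]

/-- The search for a path with overlapping chords at its ends. -/
noncomputable def runOverlap (n R k : ℕ) : ℕ :=
  run n (1 + n % 2) R [(0, n - 1 - R), (k, n - 1)] [0, n - 1] [n - 1 - R, k]

/-- The search for a cycle `0, …, j - 1` with a pendant vertex `j` at `j - 1`. -/
noncomputable def runLollipop (j : ℕ) : ℕ :=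
  run (j + 1) 0 1 [(0, j - 1)] [0] [j - 1, j]

/-! ### Soundness of the search -/

theorem elim_of_ne_zero {x : ℕ} (hx : x ≠ 0) (a : ℕ) (f : ℕ → ℕ) : elim x a f = f x := by
  cases x with
  | zero => exact absurd rfl hx
  | succ y => rfl

theorem elim_cases {p : ℕ → Prop} {x a : ℕ} {f : ℕ → ℕ} (zero : x = 0 → p a)
    (ne_zero : x ≠ 0 → p (f x)) : p (elim x a f) := by
  by_cases hx : x = 0
  · subst hx
    exact zero rfl
  · rw [elim_of_ne_zero hx]
    exact ne_zero hx

theorem testBit_diff (A B i : ℕ) :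
    (diff A B).testBit i ↔ A.testBit i ∧ ¬ B.testBit i := by
  change (A ^^^ (A &&& B)).testBit i ↔ _
  rw [Nat.testBit_xor, Nat.testBit_and]
  cases A.testBit i <;> cases B.testBit i <;> simp

theorem testBit_erase {A v : ℕ} (hv : A.testBit v) (i : ℕ) :
    (erase A v).testBit i ↔ A.testBit i ∧ i ≠ v := by
  change (A ^^^ 2 ^ v).testBit i ↔ _
  rw [Nat.testBit_xor, Nat.testBit_two_pow]
  by_cases h : v = i
  · subst h
    simp [hv]
  · simp [h, Ne.symm h]

theorem testBit_rest {A : ℕ} (hA : A ≠ 0) (i : ℕ) :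
    (rest A).testBit i ↔ A.testBit i ∧ i ≠ Nat.log2 A :=
  testBit_erase (Nat.testBit_log2 hA) i

theorem testBit_log2_rest {A : ℕ} (hA : A ≠ 0) (h : rest A ≠ 0) :
    A.testBit (Nat.log2 (rest A)) :=
  ((testBit_rest hA _).1 (Nat.testBit_log2 h)).1

theorem testBit_row (H v A i : ℕ) :
    (row H v A).testBit i ↔ H.testBit (32 * v + i) ∧ A.testBit i := by
  change ((H >>> (32 * v)) &&& A).testBit i ↔ _
  rw [Nat.testBit_and, Nat.testBit_shiftRight, Bool.and_eq_true]

theorem testBit_edge {u w i j : ℕ} (hu : u < 32) (hw : w < 32) (hj : j < 32) :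
    (edge u w).testBit (32 * i + j) ↔ i = u ∧ j = w ∨ i = w ∧ j = u := by
  change (2 ^ (32 * u + w) ||| 2 ^ (32 * w + u)).testBit (32 * i + j) ↔ _
  rw [Nat.testBit_or, Nat.testBit_two_pow, Nat.testBit_two_pow, Bool.or_eq_true,
    decide_eq_true_eq, decide_eq_true_eq]
  omega

theorem card_le_of_drop_eq_zero {t A : ℕ} (h : drop t A = 0) (F : Finset ℕ)
    (hF : ∀ f ∈ F, A.testBit f) : F.card ≤ t := by
  induction t generalizing A F with
  | zero =>
    obtain rfl : A = 0 := h
    rw [Finset.card_eq_zero.2 (Finset.eq_empty_of_forall_notMem fun f hf => by simpa using hF f hf)]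
  | succ t ih =>
    change elim A 0 (fun A => drop t (rest A)) = 0 at h
    by_cases hA : A = 0
    · subst hA
      exact (ih (by cases t <;> rfl) F hF).trans t.le_succ
    · rw [elim_of_ne_zero hA] at h
      have := ih h (F.erase (Nat.log2 A)) fun f hf => by
        rw [Finset.mem_erase] at hf
        exact (testBit_rest hA f).2 ⟨hF f hf.2, hf.1⟩
      have := Finset.pred_card_le_card_erase (s := F) (a := Nat.log2 A)
      omega

theorem all_eq_zero {f : ℕ → ℕ} {k A w : ℕ} (hw : A.testBit w) (hf : f w = 0) :
    all f k A = 0 := by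
  induction k generalizing A with
  | zero => rfl
  | succ k ih =>
    change elim A 1 (fun A => elim (f (Nat.log2 A)) 0 fun _ => all f k (rest A)) = 0
    have hA : A ≠ 0 := by
      rintro rfl
      simp at hw
    rw [elim_of_ne_zero hA]
    refine elim_cases (p := (· = 0)) (fun _ => rfl) fun hlog => ih ((testBit_rest hA w).2 ⟨hw, ?_⟩)
    rintro rfl
    exact hlog hf

/-- The neighbours of `i` in the graph with adjacency matrix `H`. -/
def known (H i : ℕ) : Set ℕ := {j | j < 32 ∧ H.testBit (32 * i + j)}

/-- A graph `A` on `{0, …, n - 1}` of maximum degree three, and a set `F` of more than `t` vertices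
of degree at most two, such that the first vertex of a hamiltonian path is never in `F` and never
adjacent to one of the last `R` vertices of the path. The search refutes such graphs. -/
structure Obstruction (n t R : ℕ) (A : SimpleGraph ℕ) (F : Finset ℕ) : Prop where
  le : n ≤ 32
  lt : ∀ v w, A.Adj v w → w < n
  encard_le_three : ∀ v, (A.neighborSet v).encard ≤ 3
  card : t < F.card
  lt_of_mem : ∀ v ∈ F, v < n
  encard_le_two : ∀ v ∈ F, (A.neighborSet v).encard ≤ 2
  start_notMem : ∀ g, IsPathOn A (Set.Iio n) n g → g 0 ∉ F
  start_not_adj : ∀ g, IsPathOn A (Set.Iio n) n g → ∀ j < n, n ≤ j + R → ¬ A.Adj (g 0) (g j)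

/-- The arguments `H`, `D`, `U` of `check` are correct information about the graph `A`. -/
structure Consistent (n : ℕ) (A : SimpleGraph ℕ) (F : Finset ℕ) (H D U : ℕ) : Prop where
  known_subset : ∀ i, known H i ⊆ A.neighborSet i
  symm : ∀ i j, j ∈ known H i → i ∈ known H j
  testBit_of_mem : ∀ f ∈ F, D.testBit f
  subset_known : ∀ i < n, ¬ U.testBit i → A.neighborSet i ⊆ known H i
  lt : ∀ i, U.testBit i → i < n
  three_le : ∀ i, U.testBit i → i ∉ F → 3 ≤ (A.neighborSet i).encard
  encard_known : ∀ i, U.testBit i → (known H i).encard = 2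

/-- The number `acc`, read as in `record`, is correct information about the vertex `u`. -/
structure Correct (A : SimpleGraph ℕ) (F : Finset ℕ) (H u acc : ℕ) : Prop where
  low : ∀ f ∈ F, acc.testBit f
  high : ∀ w, A.Adj u w → w ∉ known H u → acc.testBit (w + 32)

/-- A path `g` of length `m` from `u` to `v` in `{0, …, n - 1}`; `M` is the set of the remaining
vertices. -/
structure Partial (n : ℕ) (A : SimpleGraph ℕ) (u v M m : ℕ) (g : ℕ → ℕ) : Prop where
  isPathOn : IsPathOn A {i | i < n ∧ ¬ M.testBit i} (m + 1) g
  first : g 0 = u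
  last : g m = v
  lt : ∀ i, M.testBit i → i < n

section Soundness

variable {n t R : ℕ} {A : SimpleGraph ℕ} {F : Finset ℕ} {H D U u acc : ℕ}

theorem Obstruction.end_notMem (hA : Obstruction n t R A F) {g : ℕ → ℕ}
    (hg : IsPathOn A (Set.Iio n) n g) : g (n - 1) ∉ F :=
  hA.start_notMem _ hg.reverse

theorem Obstruction.drop_ne_zero (hA : Obstruction n t R A F) (hD : ∀ f ∈ F, D.testBit f) :
    drop t D ≠ 0 :=
  fun h => (card_le_of_drop_eq_zero h F hD).not_gt hA.card

theorem Obstruction.ne_zero_of_testBit (hA : Obstruction n t R A F) (hD : ∀ f ∈ F, D.testBit f) :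
    D ≠ 0 := by
  rintro rfl
  obtain ⟨f, hf⟩ := Finset.card_pos.1 (t.zero_le.trans_lt hA.card)
  simpa using hD f hf

theorem Partial.snoc (hA : Obstruction n t R A F) (hC : Consistent n A F H D U) {v w M m : ℕ}
    {g : ℕ → ℕ} (hp : Partial n A u v M m g) (hw : (row H v M).testBit w) :
    Partial n A u w (erase M w) (m + 1) (Function.update g (m + 1) w) := by
  obtain ⟨hwH, hwM⟩ := (testBit_row ..).1 hw
  have hwn := hp.lt w hwM
  have hvw : A.Adj (g m) w := hp.last ▸ hC.known_subset v ⟨hwn.trans_le hA.le, hwH⟩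
  refine ⟨?_, ?_, Function.update_self .., fun i hi => hp.lt i ((testBit_erase hwM i).1 hi).1⟩
  · convert hp.isPathOn.snoc (fun h => h.2 hwM) hvw using 1
    ext i
    simp only [testBit_erase hwM, Set.mem_ofPred_eq, Set.mem_insert_iff]
    by_cases hi : i = w
    · simp [hi, hwn]
    · simp [hi]
  · rw [Function.update_of_ne (by omega), hp.first]

theorem Partial.exists_of_testBit_ends (hA : Obstruction n t R A F) (hC : Consistent n A F H D U)
    {k v M m i : ℕ} {g : ℕ → ℕ} (hp : Partial n A u v M m g) (hi : (ends H k v M).testBit i) :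
    ∃ M' g', Partial n A u i M' (m + k) g' ∧ ∀ j ≤ m, g' j = g j := by
  induction k generalizing v M m g with
  | zero =>
    change (2 ^ v).testBit i = true at hi
    rw [Nat.testBit_two_pow, decide_eq_true_eq] at hi
    subst hi
    exact ⟨M, g, hp, fun _ _ => rfl⟩
  | succ k ih =>
    have via : ∀ w, (row H v M).testBit w → (ends H k w (erase M w)).testBit i →
        ∃ M' g', Partial n A u i M' (m + (k + 1)) g' ∧ ∀ j ≤ m, g' j = g j := by
      intro w hw hi
      obtain ⟨M', g', hp', hg'⟩ := ih (hp.snoc hA hC hw) hi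
      refine ⟨M', g', by rwa [add_comm k, ← add_assoc], fun j hj => ?_⟩
      rw [hg' j (by omega), Function.update_of_ne (by omega)]
    revert hi
    change (elim (row H v M) 0 fun m => ends H k (Nat.log2 m) (erase M (Nat.log2 m)) |||
      elim (rest m) 0 fun m' => ends H k (Nat.log2 m') (erase M (Nat.log2 m'))).testBit i → _
    refine elim_cases (p := fun y => y.testBit i → _) (fun _ h => by simp at h) fun hm h => ?_
    rw [Nat.testBit_or, Bool.or_eq_true] at h
    refine h.elim (via _ (Nat.testBit_log2 hm)) ?_
    exact elim_cases (p := fun y => y.testBit i → _) (fun _ h => by simp at h)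
      fun hm' => via _ (testBit_log2_rest hm hm')

theorem Partial.isPathOn_Iio {v M m : ℕ} {g : ℕ → ℕ} (hp : Partial n A u v M m g)
    (hm : m + 1 = n) : IsPathOn A (Set.Iio n) n g := by
  subst hm
  refine ⟨?_, hp.isPathOn.adj⟩
  have hbij := hp.isPathOn.bijOn
  have hsub : {i | i < m + 1 ∧ ¬ M.testBit i} ⊆ Set.Iio (m + 1) := fun i hi => hi.1
  rwa [((Set.finite_Iio (m + 1)).subset hsub).eq_of_subset_of_encard_le hsub
    (by rw [← hbij.image_eq, hbij.injOn.encard_image])] at hbij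

theorem Correct.diff (h : Correct A F H u acc) {B : ℕ} (hlow : ∀ f ∈ F, ¬ B.testBit f)
    (hhigh : ∀ w, A.Adj u w → ¬ B.testBit (w + 32)) : Correct A F H u (diff acc B) :=
  ⟨fun f hf => (testBit_diff ..).2 ⟨h.low f hf, hlow f hf⟩,
    fun w hw hwH => (testBit_diff ..).2 ⟨h.high w hw hwH, hhigh w hw⟩⟩

theorem Correct.testBit_land_full (hA : Obstruction n t R A F)
    (h : Correct A F H u acc) : ∀ f ∈ F, (Nat.land acc (2 ^ n - 1)).testBit f := fun f hf => by
  change (acc &&& (2 ^ n - 1)).testBit f = true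
  simp [h.low f hf, hA.lt_of_mem f hf]

theorem Correct.record (hA : Obstruction n t R A F) (hC : Consistent n A F H D U)
    {tail en : ℕ} (h : Correct A F H u acc) (hu : u < n) (huF : u ∉ F)
    (hen : ∀ i, en.testBit i → i < n ∧ i ∉ F)
    (htail : ∀ i, tail.testBit i → i < n ∧ ¬ A.Adj u i) :
    Correct A F H u (record (2 ^ n - 1) t u (row H u (2 ^ n - 1)) tail en acc) := by
  have hn := hA.le
  have hdiff : Correct A F H u (HamSearch.diff acc (en ||| 2 ^ u ||| tail <<< 32)) := by
    refine h.diff (fun f hf hb => ?_) fun w hw hb => ?_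
    · have := hA.lt_of_mem f hf
      simp only [Nat.testBit_or, Nat.testBit_two_pow, Nat.testBit_shiftLeft, Bool.or_eq_true,
        Bool.and_eq_true, decide_eq_true_eq] at hb
      obtain (hb | rfl) | hb := hb
      · exact (hen f hb).2 hf
      · exact huF hf
      · omega
    · simp only [Nat.testBit_or, Nat.testBit_two_pow, Nat.testBit_shiftLeft, Bool.or_eq_true,
        Bool.and_eq_true, decide_eq_true_eq, Nat.add_sub_cancel] at hb
      obtain (hb | hb) | hb := hb
      · have := (hen _ hb).1
        omega
      · omega
      · exact (htail w hb.2).2 hw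
  refine elim_cases (fun _ => ?_) fun htu => ?_
  · refine elim_cases (fun h0 => absurd h0 (hA.ne_zero_of_testBit hdiff.low)) fun _ => ?_
    exact elim_cases (fun h0 => absurd h0 (hA.drop_ne_zero (hdiff.testBit_land_full hA)))
      fun _ => hdiff
  · obtain ⟨i, hi⟩ := Nat.exists_testBit_of_ne_zero htu
    change (tail &&& _).testBit i = true at hi
    rw [Nat.testBit_and, Bool.and_eq_true, testBit_row] at hi
    obtain ⟨hin, hadj⟩ := htail i hi.1
    exact absurd (hC.known_subset u ⟨by omega, hi.2.1⟩) hadj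

theorem Correct.dfs_zero (hA : Obstruction n t R A F) (hC : Consistent n A F H D U)
    {v M e m : ℕ} {g : ℕ → ℕ} (hp : Partial n A u v M m g) (hm : m + 1 + R = n)
    (h : Correct A F H u acc) :
    Correct A F H u (dfs (2 ^ n - 1) t R H u (row H u (2 ^ n - 1)) 0 v M e acc) := by
  change Correct A F H u (elim (ends H R v M) acc fun en =>
    HamSearch.record (2 ^ n - 1) t u (row H u (2 ^ n - 1)) M en acc)
  have extension : ∀ i, (ends H R v M).testBit i → ∃ g', IsPathOn A (Set.Iio n) n g' ∧
      g' (n - 1) = i ∧ ∀ j ≤ m, g' j = g j := fun i hi => by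
    obtain ⟨M', g', hp', hg'⟩ := hp.exists_of_testBit_ends hA hC hi
    exact ⟨g', hp'.isPathOn_Iio (by omega),
      by rw [← hp'.last, show n - 1 = m + R by omega], hg'⟩
  refine elim_cases (fun _ => h) fun hends => ?_
  obtain ⟨i, hi⟩ := Nat.exists_testBit_of_ne_zero hends
  obtain ⟨g', hg', -, hgg'⟩ := extension i hi
  have hfirst : g' 0 = u := (hgg' 0 m.zero_le).trans hp.first
  have hun : g' 0 < n := hg'.bijOn.mapsTo (show 0 < n by omega)
  refine h.record hA hC (hfirst ▸ hun) (hfirst ▸ hA.start_notMem g' hg') (fun i hi => ?_)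
    fun j hj => ?_
  · obtain ⟨g', hg', rfl, -⟩ := extension i hi
    exact ⟨hg'.bijOn.mapsTo (show n - 1 < n by omega), hA.end_notMem hg'⟩
  · have hjn := hp.lt j hj
    obtain ⟨i, hi, rfl⟩ := hg'.bijOn.surjOn hjn
    refine ⟨hjn, hfirst ▸ hA.start_not_adj g' hg' i hi ?_⟩
    by_contra! hij
    have him : i ≤ m := by omega
    exact (hp.isPathOn.bijOn.mapsTo (show i < m + 1 by omega)).2 (hgg' i him ▸ hj)

theorem Correct.dfs (hA : Obstruction n t R A F) (hC : Consistent n A F H D U)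
    {k v M e m : ℕ} {g : ℕ → ℕ} (hp : Partial n A u v M m g) (hm : m + 1 + (k + R) = n)
    (h : Correct A F H u acc) :
    Correct A F H u (dfs (2 ^ n - 1) t R H u (row H u (2 ^ n - 1)) k v M e acc) := by
  induction k generalizing v M e acc m g with
  | zero => exact h.dfs_zero hA hC hp (by omega)
  | succ k ih =>
    set rec := HamSearch.dfs (2 ^ n - 1) t R H u (row H u (2 ^ n - 1)) k
    have via : ∀ w e acc, (row H v M).testBit w → Correct A F H u acc →
        Correct A F H u (rec w (erase M w) e acc) := fun w e acc hw hacc =>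
      ih (hp.snoc hA hC hw) (by omega) hacc
    have via_branch : ∀ w x e acc, (row H v M).testBit w → Correct A F H u acc →
        Correct A F H u (branch H rec w x M e acc) := fun w x e acc hw hacc =>
      elim_cases (fun _ => hacc) fun _ => elim_cases (fun _ => hacc) fun _ => via _ _ _ hw hacc
    change Correct A F H u (extend H rec v M e acc)
    refine elim_cases (fun _ => h) fun hrow => ?_
    have hlog := Nat.testBit_log2 hrow
    refine elim_cases (fun _ => ?_) fun hrest => ?_
    · exact elim_cases (fun _ => h) fun _ => via _ _ _ hlog h
    · refine elim_cases (fun h0 => ?_) fun _ => ?_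
      · exact absurd h0 (hA.ne_zero_of_testBit (via_branch _ _ _ _ hlog h).low)
      · exact via_branch _ _ _ _ (testBit_log2_rest hrow hrest) (via_branch _ _ _ _ hlog h)

theorem known_subset_known_lor (i B : ℕ) : known H i ⊆ known (H ||| B) i := fun j hj =>
  ⟨hj.1, by simp [hj.2]⟩

theorem mem_known_lor_edge {w i j : ℕ} (hu : u < 32) (hw : w < 32) :
    j ∈ known (H ||| edge u w) i ↔ j ∈ known H i ∨ i = u ∧ j = w ∨ i = w ∧ j = u := by
  by_cases hj : j < 32
  · simp only [known, Set.mem_ofPred_eq, hj, true_and, Nat.testBit_or, Bool.or_eq_true,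
      testBit_edge hu hw hj]
  · simp only [known, Set.mem_ofPred_eq, hj, false_and, false_or, false_iff]
    omega

theorem Consistent.neighborSet_eq_insert (hA : Obstruction n t R A F)
    (hC : Consistent n A F H D U) {v w : ℕ} (hv : U.testBit v) (hvw : A.Adj v w)
    (hw : w ∉ known H v) : v ∉ F ∧ A.neighborSet v = insert w (known H v) := by
  have hsub : insert w (known H v) ⊆ A.neighborSet v :=
    Set.insert_subset hvw (hC.known_subset v)
  have hcard : (insert w (known H v)).encard = 3 := by
    rw [Set.encard_insert_of_notMem hw, hC.encard_known v hv]
    rfl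
  refine ⟨fun hvF => ?_, Eq.symm ?_⟩
  · have := hcard ▸ (Set.encard_le_encard hsub).trans (hA.encard_le_two v hvF)
    exact absurd this (by decide)
  · exact (Set.finite_of_encard_eq_coe hcard).eq_of_subset_of_encard_le hsub
      (hcard ▸ hA.encard_le_three v)

theorem Consistent.testBit_of_notMem_known (hA : Obstruction n t R A F)
    (hC : Consistent n A F H D U) {v w : ℕ} (hvw : A.Adj v w) (hw : w ∉ known H v) :
    U.testBit v := by
  by_contra hv
  exact hw (hC.subset_known v (hA.lt w v hvw.symm) hv hvw)

theorem Consistent.insert (hA : Obstruction n t R A F) (hC : Consistent n A F H D U)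
    (hacc : Correct A F H u acc) {w : ℕ} (huw : A.Adj u w) (hw : w ∉ known H u) :
    Consistent n A F (H ||| edge u w) (HamSearch.diff (Nat.land acc (2 ^ n - 1)) (2 ^ w))
      (erase (erase U u) w) := by
  have hn := hA.le
  have hun := hA.lt w u huw.symm
  have hwn := hA.lt u w huw
  have hu : u ∉ known H w := fun h => hw (hC.symm w u h)
  have hUu := hC.testBit_of_notMem_known hA huw hw
  have hUw := hC.testBit_of_notMem_known hA huw.symm hu
  obtain ⟨-, hnbru⟩ := hC.neighborSet_eq_insert hA hUu huw hw
  obtain ⟨hwF, hnbrw⟩ := hC.neighborSet_eq_insert hA hUw huw.symm hu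
  have hmem {i j : ℕ} := mem_known_lor_edge (H := H) (i := i) (j := j) (hun.trans_le hn)
    (hwn.trans_le hn)
  have hU' (i : ℕ) : (erase (erase U u) w).testBit i ↔ U.testBit i ∧ i ≠ u ∧ i ≠ w := by
    rw [testBit_erase ((testBit_erase hUu w).2 ⟨hUw, huw.ne'⟩), testBit_erase hUu, and_assoc]
  refine ⟨fun i j hj => ?_, fun i j hj => ?_, fun f hf => ?_, fun i hin hi j hj => ?_,
    fun i hi => hC.lt i ((hU' i).1 hi).1, fun i hi => hC.three_le i ((hU' i).1 hi).1,
    fun i hi => ?_⟩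
  · obtain hj | ⟨rfl, rfl⟩ | ⟨rfl, rfl⟩ := hmem.1 hj
    exacts [hC.known_subset i hj, huw, huw.symm]
  · have := hC.symm i j
    have := hmem.1 hj
    exact hmem.2 (by tauto)
  · refine (testBit_diff ..).2 ⟨hacc.testBit_land_full hA f hf, fun h => hwF ?_⟩
    rw [Nat.testBit_two_pow, decide_eq_true_eq] at h
    rwa [h]
  · rw [hU', not_and_or, not_and_or, not_not, not_not] at hi
    obtain hi | rfl | rfl := hi
    · exact known_subset_known_lor i _ (hC.subset_known i hin hi hj)
    · exact hmem.2 ((hnbru.subset hj).symm.imp_right fun hjw => Or.inl ⟨rfl, hjw⟩)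
    · exact hmem.2 ((hnbrw.subset hj).symm.imp_right fun hju => Or.inr ⟨rfl, hju⟩)
  · obtain ⟨hi, hiu, hiw⟩ := (hU' i).1 hi
    rw [← hC.encard_known i hi]
    congr 1
    ext j
    simp [hmem, hiu, hiw]

theorem Correct.init (hA : Obstruction n t R A F) (hC : Consistent n A F H D U)
    (hu : U.testBit u) : Correct A F H u
      (D ||| (HamSearch.diff (erase U u) (row H u (2 ^ n - 1))) <<< 32) := by
  refine ⟨fun f hf => ?_, fun w huw hw => ?_⟩
  · simp [hC.testBit_of_mem f hf]
  · have hUw : U.testBit w := hC.testBit_of_notMem_known hA huw.symm fun h => hw (hC.symm w u h)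
    have hbit : (HamSearch.diff (erase U u) (row H u (2 ^ n - 1))).testBit w := by
      refine (testBit_diff ..).2 ⟨(testBit_erase hu w).2 ⟨hUw, huw.ne'⟩, fun h => hw ?_⟩
      exact ⟨(hA.lt u w huw).trans_le hA.le, ((testBit_row ..).1 h).1⟩
    simp [Nat.testBit_shiftLeft, hbit]

theorem Partial.init (hu : u < n) : Partial n A u u (erase (2 ^ n - 1) u) 0 fun _ => u := by
  have hbit (i : ℕ) : (erase (2 ^ n - 1) u).testBit i ↔ i < n ∧ i ≠ u := by
    rw [testBit_erase (by simp [hu]), Nat.testBit_two_pow_sub_one, decide_eq_true_eq]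
  refine ⟨⟨?_, by omega⟩, rfl, rfl, fun i hi => ((hbit i).1 hi).1⟩
  have hset : {i | i < n ∧ ¬ (erase (2 ^ n - 1) u).testBit i} = {u} := by
    ext i
    simp only [hbit, Set.mem_ofPred_eq, Set.mem_singleton_iff]
    omega
  rw [hset, show Set.Iio (0 + 1) = {0} by ext; simp, Set.bijOn_singleton]

theorem Consistent.exists_notMem_known (hC : Consistent n A F H D U) (hu : U.testBit u)
    (huF : u ∉ F) : ∃ w, A.Adj u w ∧ w ∉ known H u :=
  Set.not_subset_iff_exists_mem_notMem.1 fun h => absurd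
    ((hC.three_le u hu huF).trans ((Set.encard_le_encard h).trans_eq (hC.encard_known u hu)))
    (by decide)

theorem Correct.all_eq_zero (hA : Obstruction n t R A F) (hC : Consistent n A F H D U)
    (hacc : Correct A F H u acc) (hu : U.testBit u) (huF : u ∉ F) {rec : ℕ → ℕ → ℕ → ℕ}
    (hrec : ∀ H D U, Consistent n A F H D U → rec H D U = 0) :
    all (fun w => elim (Nat.lor H (edge u w)) 0 fun H' =>
      elim (HamSearch.diff (Nat.land acc (2 ^ n - 1)) (Nat.pow 2 w)) 1 fun D' =>
        rec H' D' (erase (erase U u) w)) 32 (Nat.shiftRight acc 32) = 0 := by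
  obtain ⟨w, huw, hw⟩ := hC.exists_notMem_known hu huF
  have hC' := hC.insert hA hacc huw hw
  refine HamSearch.all_eq_zero (w := w) ?_ ?_
  · change (acc >>> 32).testBit w = true
    rw [Nat.testBit_shiftRight, add_comm]
    exact hacc.high w huw hw
  · refine elim_cases (p := (· = 0)) (fun _ => rfl) fun _ => ?_
    exact elim_cases (p := (· = 0))
      (fun h => absurd h (hA.ne_zero_of_testBit hC'.testBit_of_mem)) fun _ => hrec _ _ _ hC'

theorem tryVertex_eq_zero (hA : Obstruction n t R A F) (hC : Consistent n A F H D U)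
    (hR : R < n) {rec : ℕ → ℕ → ℕ → ℕ} (hrec : ∀ H D U, Consistent n A F H D U → rec H D U = 0) :
    tryVertex (2 ^ n - 1) n t R rec H D U u 0 = 0 := by
  refine elim_cases (p := (· = 0)) (fun _ => rfl) fun h0 => ?_
  have hu : U.testBit u := by
    obtain ⟨i, hi⟩ := Nat.exists_testBit_of_ne_zero h0
    change (U &&& 2 ^ u).testBit i = true at hi
    rw [Nat.testBit_and, Nat.testBit_two_pow, Bool.and_eq_true, decide_eq_true_eq] at hi
    exact hi.2 ▸ hi.1
  have hacc := (Correct.init hA hC hu).dfs (k := n - 1 - R) (e := 1) hA hC (.init (hC.lt u hu))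
    (by omega)
  refine elim_cases (p := (· = 0))
    (fun h => absurd h (hA.ne_zero_of_testBit hacc.low)) fun _ => ?_
  refine elim_cases (p := (· = 0)) (fun h => ?_) fun _ => rfl
  refine hacc.all_eq_zero hA hC hu (fun huF => ?_) hrec
  have := congrArg (Nat.testBit · u) h
  change (_ &&& 2 ^ u).testBit u = Nat.testBit 0 u at this
  simp [hacc.low u huF] at this

theorem tryVertices_eq_zero (hA : Obstruction n t R A F) (hC : Consistent n A F H D U)
    (hR : R < n) {rec : ℕ → ℕ → ℕ → ℕ} (hrec : ∀ H D U, Consistent n A F H D U → rec H D U = 0)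
    (k : ℕ) : tryVertices (2 ^ n - 1) n t R rec H D U k = 0 := by
  induction k with
  | zero => rfl
  | succ k ih =>
    change tryVertex _ n t R rec H D U _ (tryVertices (2 ^ n - 1) n t R rec H D U k) = 0
    rw [ih]
    exact tryVertex_eq_zero hA hC hR hrec

theorem check_eq_zero (hA : Obstruction n t R A F) (hC : Consistent n A F H D U) (hR : R < n)
    (d : ℕ) : check (2 ^ n - 1) n t R d H D U = 0 := by
  induction d generalizing H D U with
  | zero => rfl
  | succ d ih =>
    change elim (drop t D) 1 (fun _ => tryVertices _ n t R _ H D U n) = 0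
    refine elim_cases (p := (· = 0))
      (fun h => absurd h (hA.drop_ne_zero hC.testBit_of_mem)) fun _ => ?_
    exact tryVertices_eq_zero hA hC hR (fun H D U hC => ih hC) n

theorem testBit_mask (l : List ℕ) (i : ℕ) : (mask l).testBit i ↔ i ∈ l := by
  induction l with
  | nil => simp [mask]
  | cons v l ih =>
    change (2 ^ v ||| mask l).testBit i ↔ _
    rw [Nat.testBit_or, Bool.or_eq_true, ih, Nat.testBit_two_pow, decide_eq_true_eq,
      List.mem_cons, eq_comm]

theorem mem_known_graph {es : List (ℕ × ℕ)} (hes : ∀ e ∈ es, e.1 < 32 ∧ e.2 < 32) {i j : ℕ} :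
    j ∈ known (graph es) i ↔ (i, j) ∈ es ∨ (j, i) ∈ es := by
  induction es with
  | nil => simp [graph, known]
  | cons e es ih =>
    have he := hes e List.mem_cons_self
    change j ∈ known (edge e.1 e.2 ||| graph es) i ↔ _
    rw [Nat.lor_comm, mem_known_lor_edge he.1 he.2,
      ih fun e' he' => hes e' (List.mem_cons_of_mem _ he')]
    simp only [List.mem_cons, Prod.ext_iff]
    tauto

theorem mem_pathEdges {i j : ℕ} : (i, j) ∈ pathEdges n ↔ j = i + 1 ∧ j < n := by
  simp only [pathEdges, List.mem_map, List.mem_range, Prod.mk.injEq]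
  constructor
  · rintro ⟨k, hk, rfl, rfl⟩
    omega
  · rintro ⟨rfl, h⟩
    exact ⟨i, by omega, rfl, rfl⟩

theorem Consistent.init (hA : Obstruction n t R A F) {es : List (ℕ × ℕ)} {low sat : List ℕ}
    (hes : ∀ e ∈ es, A.Adj e.1 e.2) (hlow : ∀ i ∈ low, i ∉ F)
    (hsat : ∀ i ∈ sat, i ∉ F ∧ ∀ j, A.Adj i j → (i, j) ∈ es ∨ (j, i) ∈ es)
    (hunsat : ∀ i < n, i ∉ sat → (i ∉ F → 3 ≤ (A.neighborSet i).encard) ∧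
      {j | (i, j) ∈ es ∨ (j, i) ∈ es}.encard = 2) :
    Consistent n A F (graph es) (HamSearch.diff (2 ^ n - 1) (mask (low ++ sat)))
      (HamSearch.diff (2 ^ n - 1) (mask sat)) := by
  have hmem {i j : ℕ} := mem_known_graph (i := i) (j := j) fun e he =>
    ⟨(hA.lt _ _ (hes e he).symm).trans_le hA.le, (hA.lt _ _ (hes e he)).trans_le hA.le⟩
  have hdiff {l : List ℕ} {i : ℕ} :
      (HamSearch.diff (2 ^ n - 1) (mask l)).testBit i ↔ i < n ∧ i ∉ l := by
    rw [testBit_diff, testBit_mask, Nat.testBit_two_pow_sub_one, decide_eq_true_eq]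
  refine ⟨fun i j hj => ?_, fun i j hj => hmem.2 (hmem.1 hj).symm, fun f hf => ?_,
    fun i hin hi j hj => hmem.2 ?_, fun i hi => (hdiff.1 hi).1, fun i hi => ?_, fun i hi => ?_⟩
  · exact (hmem.1 hj).elim (hes _) fun h => (hes _ h).symm
  · refine hdiff.2 ⟨hA.lt_of_mem f hf, fun h => ?_⟩
    exact (List.mem_append.1 h).elim (hlow f · hf) fun h => (hsat f h).1 hf
  · exact (hsat i (by_contra fun h => hi (hdiff.2 ⟨hin, h⟩))).2 j hj
  · exact (hunsat i (hdiff.1 hi).1 (hdiff.1 hi).2).1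
  · rw [← (hunsat i (hdiff.1 hi).1 (hdiff.1 hi).2).2]
    exact congrArg _ (Set.ext fun j => hmem)

theorem run_eq_zero (hA : Obstruction n t R A F) (hR : R < n) {chords : List (ℕ × ℕ)}
    {low sat : List ℕ} (hpath : ∀ i, i + 1 < n → A.Adj i (i + 1))
    (hchords : ∀ e ∈ chords, A.Adj e.1 e.2) (hlow : ∀ i ∈ low, i ∉ F)
    (hsat : ∀ i ∈ sat, i ∉ F ∧ ∀ j, A.Adj i j →
      (i, j) ∈ pathEdges n ++ chords ∨ (j, i) ∈ pathEdges n ++ chords)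
    (hunsat : ∀ i < n, i ∉ sat → (i ∉ F → 3 ≤ (A.neighborSet i).encard) ∧
      {j | (i, j) ∈ pathEdges n ++ chords ∨ (j, i) ∈ pathEdges n ++ chords}.encard = 2) :
    run n t R chords low sat = 0 := by
  have hC := Consistent.init hA (es := pathEdges n ++ chords) (fun e he => ?_) hlow hsat hunsat
  · refine elim_cases (p := (· = 0)) (fun _ => rfl) fun _ => ?_
    refine elim_cases (p := (· = 0)) (fun _ => rfl) fun _ => ?_
    refine elim_cases (p := (· = 0)) (fun _ => rfl) fun _ => ?_
    exact elim_cases (p := (· = 0)) (fun _ => rfl) fun _ => check_eq_zero hA hC hR _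
  · obtain he | he := List.mem_append.1 he
    · obtain ⟨i, j⟩ := e
      obtain ⟨rfl, h⟩ := mem_pathEdges.1 he
      exact hpath i h
    · exact hchords e he

end Soundness

section Runs

variable {n t R : ℕ} {A : SimpleGraph ℕ} {F : Finset ℕ}

theorem Obstruction.eq_of_adj (hA : Obstruction n t R A F) {v a b c : ℕ} (ha : A.Adj v a)
    (hb : A.Adj v b) (hc : A.Adj v c) (hab : a ≠ b) (hac : a ≠ c) (hbc : b ≠ c) :
    v ∉ F ∧ ∀ w, A.Adj v w → w = a ∨ w = b ∨ w = c := by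
  have hsub : {a, b, c} ⊆ A.neighborSet v := by
    rintro w (rfl | rfl | rfl) <;> assumption
  have hcard : ({a, b, c} : Set ℕ).encard = 3 := Set.encard_eq_three.2 ⟨a, b, c, hab, hac, hbc, rfl⟩
  refine ⟨fun hv => ?_, fun w hw => ?_⟩
  · have := hcard ▸ (Set.encard_le_encard hsub).trans (hA.encard_le_two v hv)
    exact absurd this (by decide)
  · have := (Set.toFinite _).eq_of_subset_of_encard_le hsub (hcard ▸ hA.encard_le_three v)
    exact this.superset hw

theorem Obstruction.eq_of_adj_of_chord (hA : Obstruction n t R A F)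
    (hpath : ∀ i, i + 1 < n → A.Adj i (i + 1)) {i c : ℕ} (h0 : 0 < i) (hi : i + 1 < n)
    (hc : A.Adj i c) (hpred : i - 1 ≠ c) (hsucc : i + 1 ≠ c) :
    i ∉ F ∧ ∀ j, A.Adj i j → j = i - 1 ∨ j = i + 1 ∨ j = c :=
  hA.eq_of_adj (adj_pred (f := fun i => i) hpath h0 (by omega)) (hpath i hi) hc (by omega) hpred
    hsucc

theorem runOverlap_eq_zero {k : ℕ} (hA : Obstruction n (1 + n % 2) R A F)
    (hthree : ∀ i < n, i ∉ F → 3 ≤ (A.neighborSet i).encard)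
    (hpath : ∀ i, i + 1 < n → A.Adj i (i + 1)) (h0 : 0 ∉ F) (hlast : n - 1 ∉ F)
    (hR : 2 ≤ R) (hRk : R ≤ k) (hk : 2 * k + R + 2 ≤ n) (h1 : A.Adj 0 (n - 1 - R))
    (h2 : A.Adj k (n - 1)) : runOverlap n R k = 0 := by
  have hsat1 := hA.eq_of_adj_of_chord hpath (by omega) (by omega) h1.symm (by omega) (by omega)
  have hsat2 := hA.eq_of_adj_of_chord hpath (by omega) (by omega) h2 (by omega) (by omega)
  refine run_eq_zero hA (by omega) hpath (by simp [h1, h2]) (by simp [h0, hlast]) ?_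
    fun i hi hisat => ⟨hthree i hi, ?_⟩
  all_goals simp only [List.mem_append, mem_pathEdges, List.mem_cons, Prod.mk.injEq,
    List.not_mem_nil, or_false] at *
  · rintro i (rfl | rfl)
    · exact ⟨hsat1.1, fun j hj => by have := hsat1.2 j hj; omega⟩
    · exact ⟨hsat2.1, fun j hj => by have := hsat2.2 j hj; omega⟩
  · refine Set.encard_eq_two.2 ⟨if i = 0 then n - 1 - R else i - 1,
      if i = n - 1 then k else i + 1, by split_ifs <;> omega, Set.ext fun j => ?_⟩
    simp only [Set.mem_ofPred_eq, Set.mem_insert_iff, Set.mem_singleton_iff]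
    split_ifs <;> omega

theorem runTripod_eq_zero {a b : ℕ} (hA : Obstruction n (1 + n % 2) 1 A F)
    (hthree : ∀ i < n, i ∉ F → 3 ≤ (A.neighborSet i).encard)
    (hpath : ∀ i, i + 1 < n → A.Adj i (i + 1)) (h0 : 0 ∉ F)
    (ha : 1 ≤ a) (hab : a ≤ b) (hb : 2 * b + a + 4 ≤ n) (h1 : A.Adj 0 (n - 2))
    (h2 : A.Adj a (n - 1)) (h3 : A.Adj (a + 1 + b) (n - 1)) : runTripod n a b = 0 := by
  have hsat1 := hA.eq_of_adj_of_chord hpath (by omega) (by omega) h1.symm (by omega) (by omega)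
  have hsat2 := hA.eq_of_adj_of_chord hpath (by omega) (by omega) h2 (by omega) (by omega)
  have hsat3 := hA.eq_of_adj_of_chord hpath (by omega) (by omega) h3 (by omega) (by omega)
  have hsat4 := hA.eq_of_adj (adj_pred (f := fun i => i) hpath (by omega) (by omega)) h2.symm
    h3.symm (by omega) (by omega) (by omega)
  refine run_eq_zero hA (by omega) hpath (by simp [h1, h2, h3]) (by simp [h0]) ?_
    fun i hi hisat => ⟨hthree i hi, ?_⟩
  all_goals simp only [List.mem_append, mem_pathEdges, List.mem_cons, Prod.mk.injEq,
    List.not_mem_nil, or_false] at *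
  · rintro i (rfl | rfl | rfl | rfl)
    · exact ⟨hsat4.1, fun j hj => by have := hsat4.2 j hj; omega⟩
    · exact ⟨hsat1.1, fun j hj => by have := hsat1.2 j hj; omega⟩
    · exact ⟨hsat2.1, fun j hj => by have := hsat2.2 j hj; omega⟩
    · exact ⟨hsat3.1, fun j hj => by have := hsat3.2 j hj; omega⟩
  · refine Set.encard_eq_two.2 ⟨if i = 0 then n - 2 else i - 1, i + 1,
      by split_ifs <;> omega, Set.ext fun j => ?_⟩
    simp only [Set.mem_ofPred_eq, Set.mem_insert_iff, Set.mem_singleton_iff]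
    split_ifs <;> omega

theorem runLollipop_eq_zero {j : ℕ} (hA : Obstruction (j + 1) 0 1 A F)
    (hthree : ∀ i < j, i ∉ F → 3 ≤ (A.neighborSet i).encard)
    (hpath : ∀ i, i + 1 < j + 1 → A.Adj i (i + 1)) (h0 : 0 ∉ F) (hjF : j ∉ F) (hj : 3 ≤ j)
    (h1 : A.Adj 0 (j - 1)) (h2 : ∀ i, A.Adj j i → i = j - 1) : runLollipop j = 0 := by
  have hsat1 := hA.eq_of_adj_of_chord hpath (by omega) (by omega) h1.symm (by omega) (by omega)
  refine run_eq_zero hA (by omega) hpath (by simp [h1]) (by simp [h0]) ?_ fun i hi hisat => ?_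
  all_goals simp only [List.mem_append, mem_pathEdges, List.mem_cons, Prod.mk.injEq,
    List.not_mem_nil, or_false] at *
  · rintro i (rfl | rfl)
    · exact ⟨hsat1.1, fun j hj => by have := hsat1.2 j hj; omega⟩
    · exact ⟨hjF, fun i hi => by have := h2 i hi; omega⟩
  · refine ⟨hthree i (by omega), Set.encard_eq_two.2 ⟨if i = 0 then j - 1 else i - 1, i + 1,
      by split_ifs <;> omega, Set.ext fun j => ?_⟩⟩
    simp only [Set.mem_ofPred_eq, Set.mem_insert_iff, Set.mem_singleton_iff]
    split_ifs <;> omega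

end Runs

/-! ### Evaluation of the search -/

-- The tripods on 17 vertices are a separate declaration to limit the memory used by the kernel.
theorem runTripod_ne_zero_of_lt : ∀ n ∈ List.range 17, ∀ b ∈ List.range n, ∀ a ∈ List.range n,
    1 ≤ a → a ≤ b → 2 * b + a + 4 ≤ n → runTripod n a b ≠ 0 := by
  decide +kernel

theorem runTripod_seventeen_ne_zero : ∀ b ∈ List.range 17, ∀ a ∈ List.range 17,
    1 ≤ a → a ≤ b → 2 * b + a + 4 ≤ 17 → runTripod 17 a b ≠ 0 := by
  decide +kernel

theorem runOverlap_ne_zero : ∀ n ∈ List.range 18, ∀ k ∈ List.range n, ∀ R ∈ List.range n,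
    2 ≤ R → R ≤ k → 2 * k + R + 2 ≤ n → runOverlap n R k ≠ 0 := by
  decide +kernel

theorem runLollipop_ne_zero : ∀ j ∈ List.range 9, 3 ≤ j → runLollipop j ≠ 0 := by
  decide +kernel

/-! ### The extremal hamiltonian path -/

section Counterexample

variable {V : Type*} {G : SimpleGraph V} {n R : ℕ} {f : ℕ → V}

/-- The graph `G` with vertices numbered along the path `f`. -/
def positionGraph (G : SimpleGraph V) (n : ℕ) (f : ℕ → V) : SimpleGraph ℕ where
  Adj i j := i < n ∧ j < n ∧ G.Adj (f i) (f j)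
  symm := ⟨fun _ _ h => ⟨h.2.1, h.1, h.2.2.symm⟩⟩
  loopless := ⟨fun _ h => G.irrefl h.2.2⟩

theorem IsPathOn.encard_neighborSet (hf : IsPathOn G Set.univ n f) {i : ℕ} (hi : i < n) :
    ((positionGraph G n f).neighborSet i).encard = (G.neighborSet (f i)).encard := by
  have himage : f '' (positionGraph G n f).neighborSet i = G.neighborSet (f i) := by
    refine Set.Subset.antisymm (Set.image_subset_iff.2 fun j hj => hj.2.2) fun v hv => ?_
    obtain ⟨j, hj, rfl⟩ := hf.exists_eq v
    exact ⟨j, ⟨hi, hj, hv⟩, rfl⟩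
  rw [← himage, (hf.bijOn.injOn.mono fun j hj => hj.2.1).encard_image]

theorem IsPathOn.positionGraph_adj (hf : IsPathOn G Set.univ n f) (i : ℕ) (hi : i + 1 < n) :
    (positionGraph G n f).Adj i (i + 1) :=
  ⟨by omega, hi, hf.adj i hi⟩

/-- The positions of the vertices of degree two on the path `f`. -/
noncomputable def lowPositions (G : SimpleGraph V) (n : ℕ) (f : ℕ → V) : Finset ℕ :=
  {i ∈ Finset.range n | (G.neighborSet (f i)).ncard = 2}

theorem mem_lowPositions {i : ℕ} :
    i ∈ lowPositions G n f ↔ i < n ∧ (G.neighborSet (f i)).ncard = 2 := by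
  simp [lowPositions]

theorem IsPathOn.card_lowPositions (hf : IsPathOn G Set.univ n f) :
    (lowPositions G n f).card = {v | (G.neighborSet v).ncard = 2}.ncard := by
  have himage : f '' lowPositions G n f = {v | (G.neighborSet v).ncard = 2} := by
    refine Set.Subset.antisymm (Set.image_subset_iff.2 fun i hi => (mem_lowPositions.1 hi).2)
      fun v hv => ?_
    obtain ⟨i, hi, rfl⟩ := hf.exists_eq v
    exact ⟨i, mem_lowPositions.2 ⟨hi, hv⟩, rfl⟩
  rw [← himage, (hf.bijOn.injOn.mono fun i hi => (mem_lowPositions.1 hi).1).ncard_image,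
    Set.ncard_coe_finset]

theorem IsPathOn.natCard_eq (hf : IsPathOn G Set.univ n f) : Nat.card V = n := by
  simpa using hf.bijOn.ncard_eq.symm

theorem ncard_degree_two_mod_two [Finite V]
    (hdeg : ∀ v, (G.neighborSet v).ncard = 2 ∨ (G.neighborSet v).ncard = 3) :
    {v | (G.neighborSet v).ncard = 2}.ncard % 2 = Nat.card V % 2 := by
  classical
  have := Fintype.ofFinite V
  have hdegree : ∀ v, G.degree v = (G.neighborSet v).ncard := fun v => by
    rw [← G.card_neighborSet_eq_degree, Set.ncard_eq_toFinset_card', Set.toFinset_card]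
  have hodd : ∀ v, Odd (G.degree v) ↔ ¬(G.neighborSet v).ncard = 2 := fun v => by
    rw [hdegree]
    rcases hdeg v with h | h <;> rw [h] <;> decide
  have heven := G.even_card_odd_degree_vertices
  simp only [hodd, Nat.even_iff] at heven
  have hsum := Finset.card_filter_add_card_filter_not (s := (Finset.univ : Finset V))
    (fun v => (G.neighborSet v).ncard = 2)
  rw [Set.ncard_eq_toFinset_card', Set.toFinset_ofPred, Nat.card_eq_fintype_card,
    ← Finset.card_univ]
  omega

/-- The graph `G`, on `n` vertices, violates the theorem. -/
structure Counterexample (G : SimpleGraph V) (n : ℕ) : Prop where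
  le : n ≤ 17
  deg : ∀ v : V, (G.neighborSet v).ncard = 2 ∨ (G.neighborSet v).ncard = 3
  two_le : 2 ≤ {v : V | (G.neighborSet v).ncard = 2}.ncard
  cut : ∀ v : V, ¬ (G.induce ({v}ᶜ : Set V)).Connected →
    ∀ C : (G.induce ({v}ᶜ : Set V)).ConnectedComponent, ∃ w : ({v}ᶜ : Set V),
      (G.induce ({v}ᶜ : Set V)).connectedComponentMk w = C ∧ (G.neighborSet (w : V)).ncard = 2
  ncard_ne_two : ∀ f, IsPathOn G Set.univ n f → (G.neighborSet (f 0)).ncard ≠ 2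

/-- No hamiltonian path of `G` has an edge from its first vertex to one of its last `R` vertices. -/
def NoChord (G : SimpleGraph V) (n R : ℕ) : Prop :=
  ∀ f, IsPathOn G Set.univ n f → ∀ j < n, n ≤ j + R → ¬ G.Adj (f 0) (f j)

theorem NoChord.le_of_adj_last (hR : NoChord G n R) (hf : IsPathOn G Set.univ n f) {k : ℕ}
    (hk : k < n) (h : G.Adj (f k) (f (n - 1))) : R ≤ k := by
  by_contra! hkR
  refine hR _ hf.reverse (n - 1 - k) (by omega) (by omega) ?_
  simpa only [Nat.sub_zero, show n - 1 - (n - 1 - k) = k by omega] using h.symm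

theorem exists_adj_ne_ne {v : V} (h : 3 ≤ (G.neighborSet v).encard) (a b : V) :
    ∃ c, G.Adj v c ∧ c ≠ a ∧ c ≠ b := by
  by_contra! hne
  have hsub : G.neighborSet v ⊆ {a, b} := fun c hc => or_iff_not_imp_left.2 (hne c hc)
  have hpair : ({a, b} : Set V).encard ≤ 2 := by
    simpa [one_add_one_eq_two] using Set.encard_insert_le {b} a
  exact absurd (h.trans <| (Set.encard_le_encard hsub).trans hpair) (by decide)

namespace Counterexample

theorem encard_le_three (hG : Counterexample G n) (v : V) : (G.neighborSet v).encard ≤ 3 := by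
  rcases hG.deg v with h | h
  · exact ((ENat.toNat_eq_iff two_ne_zero).1 h).trans_le (by decide)
  · exact ((ENat.toNat_eq_iff three_ne_zero).1 h).le

theorem three_le_encard (hG : Counterexample G n) {v : V} (h : (G.neighborSet v).ncard ≠ 2) :
    3 ≤ (G.neighborSet v).encard :=
  ((ENat.toNat_eq_iff three_ne_zero).1 ((hG.deg v).resolve_left h)).ge

theorem three_le_encard_positionGraph (hG : Counterexample G n) (hf : IsPathOn G Set.univ n f)
    {i : ℕ} (hi : i < n) (hlow : i ∉ lowPositions G n f) :
    3 ≤ ((positionGraph G n f).neighborSet i).encard :=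
  hf.encard_neighborSet hi ▸ hG.three_le_encard fun h => hlow (mem_lowPositions.2 ⟨hi, h⟩)

theorem zero_notMem (hG : Counterexample G n) (hf : IsPathOn G Set.univ n f) :
    0 ∉ lowPositions G n f := fun h => hG.ncard_ne_two f hf (mem_lowPositions.1 h).2

theorem last_notMem (hG : Counterexample G n) (hf : IsPathOn G Set.univ n f) :
    n - 1 ∉ lowPositions G n f := fun h =>
  hG.ncard_ne_two _ hf.reverse (mem_lowPositions.1 h).2

theorem lt_card_lowPositions (hG : Counterexample G n) (hf : IsPathOn G Set.univ n f) :
    1 + n % 2 < (lowPositions G n f).card := by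
  have : Finite V := Set.finite_univ_iff.1 (hf.bijOn.image_eq ▸ (Set.finite_Iio n).image f)
  have htwo := hG.two_le
  have hparity := ncard_degree_two_mod_two hG.deg
  rw [hf.natCard_eq] at hparity
  rw [hf.card_lowPositions]
  omega

theorem pos (hG : Counterexample G n) (hf : IsPathOn G Set.univ n f) : 0 < n := by
  by_contra! hn
  have := hG.lt_card_lowPositions hf
  simp [lowPositions, Nat.le_zero.1 hn] at this

theorem obstruction (hG : Counterexample G n) (hR : NoChord G n R)
    (hf : IsPathOn G Set.univ n f) :
    Obstruction n (1 + n % 2) R (positionGraph G n f) (lowPositions G n f) where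
  le := hG.le.trans (by norm_num)
  lt _ _ h := h.2.1
  encard_le_three i := by
    by_cases hi : i < n
    · exact hf.encard_neighborSet hi ▸ hG.encard_le_three _
    · have : (positionGraph G n f).neighborSet i = ∅ :=
        Set.eq_empty_of_forall_notMem fun j hj => hi hj.1
      simp [this]
  card := hG.lt_card_lowPositions hf
  lt_of_mem _ hi := (mem_lowPositions.1 hi).1
  encard_le_two i hi := by
    obtain ⟨hin, htwo⟩ := mem_lowPositions.1 hi
    exact hf.encard_neighborSet hin ▸ ((ENat.toNat_eq_iff two_ne_zero).1 htwo).le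
  start_notMem _ hg h :=
    hG.ncard_ne_two _ (hg.comp hf.bijOn fun _ _ h => h.2.2) (mem_lowPositions.1 h).2
  start_not_adj _ hg j hj hjR h := hR _ (hg.comp hf.bijOn fun _ _ h => h.2.2) j hj hjR h.2.2

/-- An edge between the ends of a hamiltonian path closes it to a cycle, on which a hamiltonian
path can start at any vertex. -/
theorem noChord_one (hG : Counterexample G n) : NoChord G n 1 := by
  intro f hf j hj hle hadj
  obtain rfl : j = n - 1 := by omega
  obtain ⟨v, hv⟩ : {v | (G.neighborSet v).ncard = 2}.Nonempty :=
    Set.nonempty_of_ncard_ne_zero (by have := hG.two_le; omega)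
  obtain ⟨k, hk, rfl⟩ := hf.exists_eq v
  exact hG.ncard_ne_two _ (hf.cyclicShift hadj hk) (by simpa [hk] using hv)

theorem false_of_overlap_of_le (hG : Counterexample G n) (hR : NoChord G n R) (hR2 : 2 ≤ R)
    (hf : IsPathOn G Set.univ n f) {k : ℕ} (hk : 2 * k + R + 2 ≤ n)
    (h0 : G.Adj (f 0) (f (n - 1 - R))) (h1 : G.Adj (f k) (f (n - 1))) : False := by
  have hRk := hR.le_of_adj_last hf (by omega) h1
  have hn := hG.le
  exact runOverlap_ne_zero n (List.mem_range.2 (by omega)) k (List.mem_range.2 (by omega))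
    R (List.mem_range.2 (by omega)) hR2 hRk hk <|
    runOverlap_eq_zero (hG.obstruction hR hf) (fun _ => hG.three_le_encard_positionGraph hf)
      hf.positionGraph_adj (hG.zero_notMem hf) (hG.last_notMem hf) hR2 hRk hk
      ⟨by omega, by omega, h0⟩ ⟨by omega, by omega, h1⟩

theorem false_of_overlap (hG : Counterexample G n) (hR : NoChord G n R) (hR2 : 2 ≤ R)
    (hf : IsPathOn G Set.univ n f) {k : ℕ} (hk : k < n - 1 - R)
    (h0 : G.Adj (f 0) (f (n - 1 - R))) (h1 : G.Adj (f k) (f (n - 1))) : False := by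
  by_cases hk' : 2 * k + R + 2 ≤ n
  · exact hG.false_of_overlap_of_le hR hR2 hf hk' h0 h1
  · refine hG.false_of_overlap_of_le hR hR2 (hf.posaRotation (by omega) h0)
      (k := n - 1 - R - 1 - k) (by omega) ?_ ?_
    · rw [if_pos (by omega), if_neg (by omega)]
      exact (adj_pred hf.adj (by omega) (by omega)).symm
    · rwa [if_pos (by omega), if_neg (by omega),
        show n - 1 - R - 1 - (n - 1 - R - 1 - k) = k by omega]

end Counterexample

/-- A cycle `f 0, …, f m` through all vertices except `w`, and three neighbours of `w` on it,
which are separated by `a`, `b` and `c` vertices of the cycle. -/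
structure IsTripod (G : SimpleGraph V) (w : V) (m a b c : ℕ) (f : ℕ → V) : Prop where
  isPathOn : IsPathOn G {w}ᶜ (m + 1) f
  add_eq : a + b + c + 2 = m
  adj_zero : G.Adj (f 0) (f m)
  adj_fst : G.Adj (f a) w
  adj_snd : G.Adj (f (a + 1 + b)) w
  adj_last : G.Adj (f m) w

theorem IsTripod.exists_reverse {w : V} {m a b c : ℕ} (h : IsTripod G w m a b c f) :
    ∃ g, IsTripod G w m c b a g := by
  have hm := h.add_eq
  refine ⟨_, h.isPathOn.posaRotation (by omega) h.adj_zero, by omega, ?_, ?_, ?_, ?_⟩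
  · rw [if_pos (by omega), if_neg (by omega)]
    exact (adj_pred h.isPathOn.adj (by omega) (by omega)).symm
  · rw [if_pos (by omega), show m - 1 - c = a + 1 + b by omega]
    exact h.adj_snd
  · rw [if_pos (by omega), show m - 1 - (c + 1 + b) = a by omega]
    exact h.adj_fst
  · rw [if_neg (by omega)]
    exact h.adj_last

theorem IsTripod.exists_rotate {w : V} {m a b c : ℕ} (h : IsTripod G w m a b c f) :
    ∃ g, IsTripod G w m b c a g := by
  have hm := h.add_eq
  refine ⟨_, h.isPathOn.cyclicShift (k := a + 1) h.adj_zero (by omega), by omega, ?_, ?_, ?_, ?_⟩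
  · rw [if_pos (by omega), if_neg (by omega), show a + 1 + m - (m + 1) = a by omega, add_zero]
    exact (h.isPathOn.adj a (by omega)).symm
  · rw [if_pos (by omega)]
    exact h.adj_snd
  · rw [if_pos (by omega), show a + 1 + (b + 1 + c) = m by omega]
    exact h.adj_last
  · rw [if_neg (by omega), show a + 1 + m - (m + 1) = a by omega]
    exact h.adj_fst

theorem IsTripod.exists_sorted {w : V} {m a b c : ℕ} (h : IsTripod G w m a b c f) :
    ∃ a' b' c' g, IsTripod G w m a' b' c' g ∧ a' ≤ b' ∧ b' ≤ c' := by
  obtain ⟨g₁, h₁⟩ := h.exists_rotate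
  obtain ⟨g₂, h₂⟩ := h₁.exists_rotate
  obtain ⟨r, hr⟩ := h.exists_reverse
  obtain ⟨r₁, hr₁⟩ := h₁.exists_reverse
  obtain ⟨r₂, hr₂⟩ := h₂.exists_reverse
  rcases le_total a b with hab | hab <;> rcases le_total b c with hbc | hbc <;>
    rcases le_total a c with hac | hac
  all_goals first
    | exact ⟨_, _, _, _, h, by assumption, by assumption⟩
    | exact ⟨_, _, _, _, h₁, by assumption, by assumption⟩
    | exact ⟨_, _, _, _, h₂, by assumption, by assumption⟩
    | exact ⟨_, _, _, _, hr, by assumption, by assumption⟩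
    | exact ⟨_, _, _, _, hr₁, by assumption, by assumption⟩
    | exact ⟨_, _, _, _, hr₂, by assumption, by assumption⟩

theorem runTripod_ne_zero {n a b : ℕ} (hn : n ≤ 17) (ha : 1 ≤ a) (hab : a ≤ b)
    (hb : 2 * b + a + 4 ≤ n) : runTripod n a b ≠ 0 := by
  obtain rfl | hlt := hn.eq_or_lt
  · exact runTripod_seventeen_ne_zero b (List.mem_range.2 (by omega)) a
      (List.mem_range.2 (by omega)) ha hab hb
  · exact runTripod_ne_zero_of_lt n (List.mem_range.2 hlt) b (List.mem_range.2 (by omega)) a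
      (List.mem_range.2 (by omega)) ha hab hb

namespace Counterexample

theorem false_of_isTripod {w : V} {m a b c : ℕ} (hG : Counterexample G (m + 2))
    (h : IsTripod G w m a b c f) : False := by
  obtain ⟨a, b, c, f, h, hab, hbc⟩ := h.exists_sorted
  have hm := h.add_eq
  have hf := h.isPathOn.snoc (by simp) h.adj_last
  rw [show insert w {w}ᶜ = (Set.univ : Set V) by ext; simp [em]] at hf
  set g := Function.update f (m + 1) w
  have hlast : g (m + 1) = w := Function.update_self ..
  have heq : ∀ i ≤ m, g i = f i := fun i hi => Function.update_of_ne (by omega) ..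
  have hadj : ∀ i ≤ m, G.Adj (f i) w → (positionGraph G (m + 2) g).Adj i (m + 1) := fun i hi h =>
    ⟨by omega, by omega, by rwa [heq i hi, hlast]⟩
  have ha : 1 ≤ a := hG.noChord_one.le_of_adj_last hf (by omega)
    (hadj a (by omega) h.adj_fst).2.2
  refine runTripod_ne_zero hG.le ha hab (by omega) <|
    runTripod_eq_zero (hG.obstruction hG.noChord_one hf)
      (fun _ => hG.three_le_encard_positionGraph hf) hf.positionGraph_adj (hG.zero_notMem hf)
      ha hab (by omega) ⟨by omega, by omega, ?_⟩ (hadj a (by omega) h.adj_fst)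
      (hadj _ (by omega) h.adj_snd)
  rw [heq 0 (by omega), heq (m + 2 - 2) (by omega)]
  exact h.adj_zero

theorem noChord_two (hG : Counterexample G n) : NoChord G n 2 := by
  intro f hf j hj hle hadj
  have hj1 : ¬ n ≤ j + 1 := fun h => hG.noChord_one f hf j hj h hadj
  obtain ⟨m, rfl⟩ : ∃ m, n = m + 2 := ⟨n - 2, by omega⟩
  obtain rfl : j = m := by omega
  have hthree := hG.three_le_encard_positionGraph hf (by omega) (hG.last_notMem hf)
  obtain ⟨p, hp, hpm, -⟩ := exists_adj_ne_ne hthree j j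
  obtain ⟨q, hq, hqm, hqp⟩ := exists_adj_ne_ne hthree j p
  have hinit : IsPathOn G {f (j + 1)}ᶜ (j + 1) f := Set.compl_eq_univ_sdiff {f (j + 1)} ▸ hf.init
  have htripod : ∀ p q, (positionGraph G (j + 2) f).Adj (j + 1) p →
      (positionGraph G (j + 2) f).Adj (j + 1) q → p < q → q ≠ j → False := by
    intro p q hp hq hpq hqj
    have := hq.ne
    have := hq.2.1
    refine hG.false_of_isTripod ⟨hinit, show p + (q - p - 1) + (j - 1 - q) + 2 = j by omega, hadj,
      hp.2.2.symm, ?_, hf.adj j (by omega)⟩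
    rw [show p + 1 + (q - p - 1) = q by omega]
    exact hq.2.2.symm
  obtain hpq | hpq := lt_or_gt_of_ne hqp
  · exact htripod q p hq hp hpq hpm
  · exact htripod p q hp hq hpq hqm

end Counterexample

/-- The graph formed by the edges of `G` among `f 0, …, f (j - 1)` and the edge from `f (j - 1)` to
`f j`, with `f i` numbered `i`. -/
def headGraph (G : SimpleGraph V) (j : ℕ) (f : ℕ → V) : SimpleGraph ℕ where
  Adj a b := (a < j ∧ b < j ∨ a + 1 = j ∧ b = j ∨ a = j ∧ b + 1 = j) ∧ G.Adj (f a) (f b)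
  symm := ⟨fun _ _ h => ⟨by omega, h.2.symm⟩⟩
  loopless := ⟨fun _ h => G.irrefl h.2⟩

theorem subsingleton_neighborSet {j : ℕ} : ((headGraph G j f).neighborSet j).Subsingleton :=
  fun a ha b hb => by
    have := ha.1
    have := hb.1
    omega

open Classical in
/-- The positions before `j - 1` of the vertices of degree two on the path `f`, and of those with a
neighbour at position `j` or later. -/
noncomputable def headLowPositions (G : SimpleGraph V) (n j : ℕ) (f : ℕ → V) : Finset ℕ :=
  {i ∈ Finset.range (j - 1) | (G.neighborSet (f i)).ncard = 2 ∨
    ∃ k < n, j ≤ k ∧ G.Adj (f i) (f k)}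

theorem mem_headLowPositions {j i : ℕ} : i ∈ headLowPositions G n j f ↔ i < j - 1 ∧
    ((G.neighborSet (f i)).ncard = 2 ∨ ∃ k < n, j ≤ k ∧ G.Adj (f i) (f k)) := by
  simp [headLowPositions]

/-- The hamiltonian path `f` starts with a cycle through its first `j` vertices, and there is no
edge from its first vertex to a vertex at position `j` or later, even if we reorder the vertices
before position `j`. -/
structure IsLollipop (G : SimpleGraph V) (n j : ℕ) (f : ℕ → V) : Prop where
  isPathOn : IsPathOn G Set.univ n f
  lt : j < n
  adj : G.Adj (f 0) (f (j - 1))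
  lt_of_adj : ∀ g, IsPathOn G Set.univ n g → (∀ i < n, j ≤ i → g i = f i) →
    ∀ k < n, G.Adj (g 0) (g k) → k < j

namespace IsLollipop

variable {j : ℕ}

theorem four_le (h : IsLollipop G n j f) (hG : Counterexample G n) : 4 ≤ j := by
  have hf := h.isPathOn
  obtain ⟨c, hc, hc1, hcj⟩ := exists_adj_ne_ne
    (hG.three_le_encard_positionGraph hf (hG.pos hf) (hG.zero_notMem hf)) 1 (j - 1)
  have hne := hc.ne
  have hcj := h.lt_of_adj f hf (fun _ _ _ => rfl) c hc.2.1 hc.2.2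
  omega

theorem zero_notMem (h : IsLollipop G n j f) (hG : Counterexample G n) :
    0 ∉ headLowPositions G n j f := by
  rw [mem_headLowPositions]
  rintro ⟨-, htwo | ⟨k, hk, hjk, hadj⟩⟩
  · exact hG.ncard_ne_two f h.isPathOn htwo
  · exact hjk.not_gt (h.lt_of_adj f h.isPathOn (fun _ _ _ => rfl) k hk hadj)

theorem headGraph_adj (h : IsLollipop G n j f) (i : ℕ) (hi : i + 1 < j + 1) :
    (headGraph G j f).Adj i (i + 1) :=
  ⟨by omega, h.isPathOn.adj i (by have := h.lt; omega)⟩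

theorem encard_insert_le (h : IsLollipop G n j f) {i k : ℕ} (hk : k < n)
    (hadj : G.Adj (f i) (f k)) :
    (insert k ((headGraph G j f).neighborSet i)).encard ≤ (G.neighborSet (f i)).encard := by
  refine Set.encard_le_encard_of_injOn (f := f) ?_ (h.isPathOn.bijOn.injOn.mono ?_)
  · rintro a (rfl | ha)
    exacts [hadj, ha.2]
  · rintro a (rfl | ha)
    exacts [hk, by have := ha.1; have := h.lt; exact Set.mem_Iio.2 (by omega)]

theorem encard_le (h : IsLollipop G n j f) (i : ℕ) :
    ((headGraph G j f).neighborSet i).encard ≤ (G.neighborSet (f i)).encard := by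
  obtain hempty | ⟨k, hk⟩ := ((headGraph G j f).neighborSet i).eq_empty_or_nonempty
  · simp [hempty]
  · have := hk.1
    have := h.lt
    exact (Set.encard_le_encard (Set.subset_insert k _)).trans
      (h.encard_insert_le (by omega) hk.2)

theorem encard_le_two (h : IsLollipop G n j f) (hG : Counterexample G n) {i : ℕ}
    (hi : i ∈ headLowPositions G n j f) : ((headGraph G j f).neighborSet i).encard ≤ 2 := by
  obtain ⟨hij, htwo | ⟨k, hk, hjk, hadj⟩⟩ := mem_headLowPositions.1 hi
  · exact (h.encard_le i).trans ((ENat.toNat_eq_iff two_ne_zero).1 htwo).le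
  · have hle := (h.encard_insert_le hk hadj).trans (hG.encard_le_three _)
    rw [Set.encard_insert_of_notMem fun hk => by have := hk.1; omega] at hle
    exact (ENat.add_le_add_iff_right ENat.one_ne_top).1 (hle.trans_eq two_add_one_eq_three.symm)

theorem three_le_encard (h : IsLollipop G n j f) (hG : Counterexample G n) {i : ℕ} (hi : i < j)
    (hlow : i ∉ headLowPositions G n j f) : 3 ≤ ((headGraph G j f).neighborSet i).encard := by
  have hj := h.four_le hG
  obtain rfl | hij := eq_or_ne i (j - 1)
  · have hsub : {j - 2, j, 0} ⊆ (headGraph G j f).neighborSet (j - 1) := by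
      rintro k (rfl | rfl | rfl)
      · have := h.headGraph_adj (j - 2) (by omega)
        rw [show j - 2 + 1 = j - 1 by omega] at this
        exact this.symm
      · have := h.headGraph_adj (k - 1) (by omega)
        rwa [Nat.sub_add_cancel (by omega)] at this
      · exact ⟨by omega, h.adj.symm⟩
    rw [← Set.encard_eq_three.2 ⟨j - 2, j, 0, by omega, by omega, by omega, rfl⟩]
    exact Set.encard_le_encard hsub
  · have hlow' := not_and.1 (mem_headLowPositions.not.1 hlow) (by omega)
    push Not at hlow'
    refine (hG.three_le_encard hlow'.1).trans ?_
    have himage : G.neighborSet (f i) ⊆ f '' (headGraph G j f).neighborSet i := fun v hv => by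
      obtain ⟨k, hk, rfl⟩ := h.isPathOn.exists_eq v
      have hkj : k < j := lt_of_not_ge fun hjk => hlow'.2 k hk hjk hv
      exact ⟨k, ⟨Or.inl ⟨hi, hkj⟩, hv⟩, rfl⟩
    exact (Set.encard_le_encard himage).trans (Set.encard_image_le _ _)

theorem zero_eq_or_eq {σ : ℕ → ℕ}
    (hσ : IsPathOn (headGraph G j f) (Set.Iio (j + 1)) (j + 1) σ) : σ 0 = j ∨ σ j = j := by
  obtain ⟨i, hi, hij⟩ := hσ.bijOn.surjOn (Set.mem_Iio.2 j.lt_succ_self)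
  rcases hσ.eq_zero_or_eq_of_subsingleton hi (hij ▸ subsingleton_neighborSet) with rfl | rfl
  exacts [Or.inl hij, Or.inr hij]

theorem start_notMem (h : IsLollipop G n j f) (hG : Counterexample G n) {σ : ℕ → ℕ}
    (hσ : IsPathOn (headGraph G j f) (Set.Iio (j + 1)) (j + 1) σ) :
    σ 0 ∉ headLowPositions G n j f := by
  rw [mem_headLowPositions]
  rintro ⟨hσj, hlow⟩
  have hσlast := (zero_eq_or_eq hσ).resolve_left (by omega)
  have hg := h.isPathOn.replaceHead h.lt hσ (fun _ _ hadj => hadj.2) hσlast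
  have heq : ∀ i, j ≤ i → (if i ≤ j then σ i else i) = i := fun i hi => by
    split_ifs with hij
    · rwa [hij.antisymm hi]
    · rfl
  rcases hlow with htwo | ⟨k, hk, hjk, hadj⟩
  · exact hG.ncard_ne_two _ hg htwo
  · refine hjk.not_gt (h.lt_of_adj _ hg (fun i _ hi => congrArg f (heq i hi)) k hk ?_)
    rwa [heq k hjk]

theorem start_not_adj (h : IsLollipop G n j f) (hG : Counterexample G n) {σ : ℕ → ℕ}
    (hσ : IsPathOn (headGraph G j f) (Set.Iio (j + 1)) (j + 1) σ) :
    ¬ (headGraph G j f).Adj (σ 0) (σ j) := by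
  have hj := h.four_le hG
  rcases zero_eq_or_eq hσ with h0 | hlast
  · exact hσ.not_adj_of_subsingleton (by omega) (h0 ▸ subsingleton_neighborSet)
  · refine fun hadj => hσ.reverse.not_adj_of_subsingleton (by omega) ?_ (by simpa using hadj.symm)
    simpa [hlast] using subsingleton_neighborSet

theorem mem_image_of_reachable (h : IsLollipop G n j f) (hj : 0 < j)
    (hexit : ∀ i < j - 1, ∀ k < n, j ≤ k → ¬ G.Adj (f i) (f k))
    {a b : ({f (j - 1)}ᶜ : Set V)} (hab : (G.induce ({f (j - 1)}ᶜ : Set V)).Reachable a b)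
    (ha : (a : V) ∈ f '' Set.Iio (j - 1)) : (b : V) ∈ f '' Set.Iio (j - 1) := by
  rw [reachable_iff_reflTransGen] at hab
  induction hab with
  | refl => exact ha
  | @tail b c _ hbc ih =>
    obtain ⟨i, hi, hib⟩ := ih
    obtain ⟨k, hk, hkc⟩ := h.isPathOn.exists_eq c
    have hadj : G.Adj (f i) (f k) := by
      rw [hib, hkc]
      exact hbc
    have hkj : k < j := lt_of_not_ge fun hjk => hexit i hi k hk hjk hadj
    have hne : k ≠ j - 1 := by
      rintro rfl
      exact c.2 hkc.symm
    exact ⟨k, Set.mem_Iio.2 (by omega), hkc⟩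

/-- Otherwise `f (j - 1)` would be a cut vertex violating the hypothesis of the theorem. -/
theorem headLowPositions_nonempty (h : IsLollipop G n j f) (hG : Counterexample G n) :
    (headLowPositions G n j f).Nonempty := by
  by_contra hempty
  rw [Finset.not_nonempty_iff_eq_empty] at hempty
  have hnot : ∀ i < j - 1, (G.neighborSet (f i)).ncard ≠ 2 ∧
      ∀ k < n, j ≤ k → ¬ G.Adj (f i) (f k) := fun i hi => by
    have := (not_and.1 (mem_headLowPositions.not.1 (hempty ▸ Finset.notMem_empty i))) hi
    push Not at this
    exact this
  have hj := h.four_le hG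
  have hn := h.lt
  have hne : ∀ i < n, i ≠ j - 1 → f i ∈ ({f (j - 1)}ᶜ : Set V) := fun i hi hij hmem =>
    hij (h.isPathOn.inj hi (by omega) hmem)
  have hzero : f 0 ∈ f '' Set.Iio (j - 1) := ⟨0, Set.mem_Iio.2 (by omega), rfl⟩
  have hclosed {a b : ({f (j - 1)}ᶜ : Set V)} :=
    h.mem_image_of_reachable (a := a) (b := b) (by omega) fun i hi => (hnot i hi).2
  obtain ⟨w, hw, hwtwo⟩ := hG.cut (f (j - 1)) (fun hconn => by
    obtain ⟨i, hi, hij⟩ := hclosed (hconn.preconnected ⟨f 0, hne 0 (by omega) (by omega)⟩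
      ⟨f j, hne j hn (by omega)⟩) hzero
    have := h.isPathOn.inj (by have := Set.mem_Iio.1 hi; omega) hn hij
    have := Set.mem_Iio.1 hi
    omega) ((G.induce ({f (j - 1)}ᶜ : Set V)).connectedComponentMk
      ⟨f 0, hne 0 (by omega) (by omega)⟩)
  obtain ⟨i, hi, hiw⟩ := hclosed (ConnectedComponent.eq.1 hw).symm hzero
  exact (hnot i hi).1 (hiw ▸ hwtwo)

theorem obstruction (h : IsLollipop G n j f) (hG : Counterexample G n) :
    Obstruction (j + 1) 0 1 (headGraph G j f) (headLowPositions G n j f) where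
  le := by have := h.lt; have := hG.le; omega
  lt _ _ hadj := by have := hadj.1; omega
  encard_le_three i := (h.encard_le i).trans (hG.encard_le_three _)
  card := (h.headLowPositions_nonempty hG).card_pos
  lt_of_mem i hi := by have := (mem_headLowPositions.1 hi).1; omega
  encard_le_two _ := h.encard_le_two hG
  start_notMem _ := h.start_notMem hG
  start_not_adj σ hσ i hi hij := by
    obtain rfl : i = j := by omega
    exact h.start_not_adj hG hσ

theorem eight_lt (h : IsLollipop G n j f) (hG : Counterexample G n) : 8 < j := by
  by_contra! hj8
  have hj := h.four_le hG
  refine runLollipop_ne_zero j (List.mem_range.2 (by omega)) (by omega) <|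
    runLollipop_eq_zero (h.obstruction hG) (fun i => h.three_le_encard hG) h.headGraph_adj
      (h.zero_notMem hG) (fun hmem => ?_) (by omega) ⟨by omega, h.adj⟩
      (fun i hadj => by have := hadj.1; omega)
  have := (mem_headLowPositions.1 hmem).1
  omega

end IsLollipop

namespace Counterexample

theorem exists_noChord (hG : Counterexample G n) (hf : IsPathOn G Set.univ n f) :
    ∃ R < n, NoChord G n R ∧ ∃ g, IsPathOn G Set.univ n g ∧ G.Adj (g 0) (g (n - 1 - R)) := by
  classical
  have hex : ∃ R < n, ∃ g, IsPathOn G Set.univ n g ∧ G.Adj (g 0) (g (n - 1 - R)) := by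
    obtain ⟨j, hj, -⟩ := exists_adj_ne_ne
      (hG.three_le_encard_positionGraph hf (hG.pos hf) (hG.zero_notMem hf)) 0 0
    have := hj.2.1
    refine ⟨n - 1 - j, by omega, f, hf, ?_⟩
    rw [show n - 1 - (n - 1 - j) = j by omega]
    exact hj.2.2
  obtain ⟨hlt, g, hg, hadj⟩ := Nat.find_spec hex
  refine ⟨Nat.find hex, hlt, fun g hg j hj hle hadj => ?_, g, hg, hadj⟩
  refine Nat.find_min hex (m := n - 1 - j) (by omega) ⟨by omega, g, hg, ?_⟩
  rwa [show n - 1 - (n - 1 - j) = j by omega]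

theorem exists_first_adj_last {J : ℕ} (hf : IsPathOn G Set.univ n f) (hn : 2 ≤ n)
    (hJ : G.Adj (f 0) (f J)) :
    ∃ K < n, (∃ g, IsPathOn G Set.univ n g ∧ G.Adj (g 0) (g J) ∧ G.Adj (g K) (g (n - 1))) ∧
      ∀ g, IsPathOn G Set.univ n g → G.Adj (g 0) (g J) →
        ∀ k < n, G.Adj (g k) (g (n - 1)) → K ≤ k := by
  classical
  have hex : ∃ K < n, ∃ g, IsPathOn G Set.univ n g ∧ G.Adj (g 0) (g J) ∧
      G.Adj (g K) (g (n - 1)) :=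
    ⟨n - 1 - 1, by omega, f, hf, hJ, (adj_pred hf.adj (by omega) (by omega)).symm⟩
  obtain ⟨hlt, hK⟩ := Nat.find_spec hex
  exact ⟨Nat.find hex, hlt, hK, fun g hg hgJ k hk hadj =>
    Nat.find_min' hex ⟨hk, g, hg, hgJ, hadj⟩⟩

theorem not_adj_last_of_adj_zero (hG : Counterexample G n) (hR : NoChord G n R) (hR2 : 2 ≤ R)
    (hf : IsPathOn G Set.univ n f) {k : ℕ} (hk : k + 1 < n - 1)
    (h0 : G.Adj (f 0) (f k)) : ¬ G.Adj (f k) (f (n - 1)) := fun h1 => by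
  have hRk := hR.le_of_adj_last hf (by omega) h1
  have hK := ((hG.obstruction hR hf).eq_of_adj_of_chord hf.positionGraph_adj (i := k)
    (by omega) (by omega) ⟨by omega, by omega, h1⟩ (by omega) (by omega)).2 0
    ⟨by omega, by omega, h0.symm⟩
  omega

theorem isLollipop_reverse {J K : ℕ} (hf : IsPathOn G Set.univ n f) (hJK : J < K) (hKn : K < n)
    (hJ : G.Adj (f 0) (f J)) (hK : G.Adj (f K) (f (n - 1)))
    (hmin : ∀ g, IsPathOn G Set.univ n g → G.Adj (g 0) (g J) →
      ∀ k < n, G.Adj (g k) (g (n - 1)) → K ≤ k) :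
    IsLollipop G n (n - K) fun i => f (n - 1 - i) where
  isPathOn := hf.reverse
  lt := by omega
  adj := by
    rw [show n - 1 - (n - K - 1) = K by omega]
    exact hK.symm
  lt_of_adj g hg heq k hk hadj := by
    have hle := hmin _ hg.reverse (by
      rw [heq _ (by omega) (by omega), heq _ (by omega) (by omega),
        show n - 1 - (n - 1 - 0) = 0 by omega, show n - 1 - (n - 1 - J) = J by omega]
      exact hJ) (n - 1 - k) (by omega) (by
      simpa only [show n - 1 - (n - 1 - k) = k by omega, Nat.sub_self] using hadj.symm)
    omega

theorem not_isPathOn (hG : Counterexample G n) : ¬ IsPathOn G Set.univ n f := fun hf => by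
  obtain ⟨R, hRn, hR, f₁, hf₁, hadj⟩ := hG.exists_noChord hf
  have hR2 : 2 ≤ R := by
    by_contra! hlt
    exact hG.noChord_two f₁ hf₁ _ (by omega) (by omega) hadj
  obtain ⟨K, hKn, ⟨g, hg, hgJ, hgK⟩, hmin⟩ := exists_first_adj_last hf₁ (by omega) hadj
  rcases lt_trichotomy K (n - 1 - R) with hlt | rfl | hlt
  · exact hG.false_of_overlap hR hR2 hg hlt hgJ hgK
  · exact hG.not_adj_last_of_adj_zero hR hR2 hg (by omega) hgJ hgK
  · have hRK := hR.le_of_adj_last hg hKn hgK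
    have hj := (isLollipop_reverse hg hlt hKn hgJ hgK hmin).eight_lt hG
    have hn := hG.le
    omega

end Counterexample

end Counterexample

section Walk

variable {V : Type*} {G : SimpleGraph V}

theorem isPathOn_of_isPath {u v : V} {p : G.Walk u v} (hp : p.IsPath)
    (hall : ∀ x, x ∈ p.support) :
    IsPathOn G Set.univ (p.length + 1) p.getVert := by
  refine ⟨⟨Set.mapsTo_univ _ _, fun i hi j hj => ?_, fun x _ => ?_⟩, fun i hi => ?_⟩
  · exact hp.getVert_injOn (Nat.lt_succ_iff.1 hi) (Nat.lt_succ_iff.1 hj)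
  · obtain ⟨i, hi, hle⟩ := Walk.mem_support_iff_exists_getVert.1 (hall x)
    exact ⟨i, Nat.lt_succ_iff.2 hle, hi⟩
  · exact p.adj_getVert_succ (by omega)

theorem IsPathOn.exists_isPath {m : ℕ} {f : ℕ → V} (hf : IsPathOn G Set.univ (m + 1) f) :
    ∃ (v : V) (p : G.Walk (f 0) v), p.IsPath ∧ ∀ x, x ∈ p.support := by
  have hne : (List.range (m + 1)).map f ≠ [] := by simp
  have hchain : ((List.range (m + 1)).map f).IsChain G.Adj :=
    List.isChain_iff_getElem.2 fun i hi => by simpa using hf.adj i (by simpa using hi)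
  refine ⟨_, (Walk.ofSupport _ hne hchain).copy (by simp [List.head_eq_getElem]) rfl, ?_,
    fun x => ?_⟩
  · rw [Walk.isPath_copy, Walk.isPath_def, Walk.support_ofSupport]
    exact List.nodup_range.map_on fun i hi j hj =>
      hf.inj (List.mem_range.1 hi) (List.mem_range.1 hj)
  · rw [Walk.support_copy, Walk.support_ofSupport, List.mem_map]
    obtain ⟨i, hi, rfl⟩ := hf.exists_eq x
    exact ⟨i, List.mem_range.2 hi, rfl⟩

end Walk

end HamSearch

theorem stmt_4 {V : Type} [Fintype V] (G : SimpleGraph V)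
    (hcard : Fintype.card V ≤ 17)
    (hdeg : ∀ v : V, (G.neighborSet v).ncard = 2 ∨ (G.neighborSet v).ncard = 3)
    (htrace : IsTraceable G)
    (h2 : 2 ≤ Set.ncard {v : V | (G.neighborSet v).ncard = 2})
    (hcut : ∀ v : V, ¬ (G.induce ({v}ᶜ : Set V)).Connected →
      ∀ C : (G.induce ({v}ᶜ : Set V)).ConnectedComponent,
        ∃ w : ({v}ᶜ : Set V),
          (G.induce ({v}ᶜ : Set V)).connectedComponentMk w = C ∧
          (G.neighborSet (w : V)).ncard = 2) :
    ∃ (u : V), (G.neighborSet u).ncard = 2 ∧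
      ∃ (v : V) (p : G.Walk u v), p.IsPath ∧ ∀ x : V, x ∈ p.support := by
  obtain ⟨u, v, p, hp, hall⟩ := htrace
  have hpath := HamSearch.isPathOn_of_isPath hp hall
  have hle : p.length + 1 ≤ 17 := by
    rwa [← hpath.natCard_eq, Nat.card_eq_fintype_card]
  by_contra hno
  have hG : HamSearch.Counterexample G (p.length + 1) :=
    ⟨hle, hdeg, h2, hcut, fun f hf h => hno ⟨f 0, h, hf.exists_isPath⟩⟩
  exact hG.not_isPathOn hpath
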